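/- arXiv:1008.1007 — 10 statements merged into one kernel-verified Lean document; each statement's English description precedes it below -/
import Mathlib

section
/- Let σ : R[t] → R[t] be the map that applies the ring involution of R = ℤ[A,A⁻¹] sending A to A⁻¹ to each coefficient and fixes t. Then for every integer n, σ(P_n) = P_{−n}. -/
/-!
Writing `P n = A ^ n Q n`, the recurrence becomes that of the rescaled Chebyshev polynomials `S n`,
`Q n = t Q (n - 1) - Q (n - 2)`, and comparing the values at `0` and `1` yields
`Q n = A⁻² S (n - 2) - A² S n`. The identity `S (-n - 2) = -S n` says that `n ↦ -n` exchanges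
`S n` and `-S (n - 2)`, hence has the same effect on `Q n` as exchanging `A` and `A⁻¹`.
-/

open Polynomial
open LaurentPolynomial (T)

noncomputable section

abbrev R : Type := LaurentPolynomial ℤ


/-- `P` is the family of polynomials `P n ∈ R[t]` defined by `P 0 = -A^2 - A^-2`,
`P 1 = -A^3 t` and the recurrence `P n = A t P (n-1) - A^2 P (n-2)` for all `n : ℤ`. -/
def IsP (P : ℤ → R[X]) : Prop :=
  P 0 = C (-T 2 - T (-2)) ∧ P 1 = C (-T 3) * X ∧
    ∀ n : ℤ, P n = C (T 1) * X * P (n - 1) - C (T 2) * P (n - 2)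

theorem eq_of_linear_recurrence {B : Type*} [Ring B] {p q : B} (hq : IsLeftRegular q)
    {f g : ℤ → B} (hf : ∀ n, f n = p * f (n - 1) - q * f (n - 2))
    (hg : ∀ n, g n = p * g (n - 1) - q * g (n - 2)) (h0 : f 0 = g 0) (h1 : f 1 = g 1) :
    f = g := by
  have forward (n : ℤ) (hn₁ : f (n - 1) = g (n - 1)) (hn₂ : f (n - 2) = g (n - 2)) :
      f n = g n := by
    rw [hf, hg, hn₁, hn₂]
  have backward (n : ℤ) (hn : f n = g n) (hn₁ : f (n - 1) = g (n - 1)) :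
      f (n - 2) = g (n - 2) := by
    have hmul : q * f (n - 2) = q * g (n - 2) := by
      rwa [hf, hg, hn₁, sub_right_inj] at hn
    exact hq hmul
  ext1 n
  induction n using Chebyshev.induct with
  | zero => exact h0
  | one => exact h1
  | add_two n ih₁ ih₀ => exact forward _ (by convert ih₁ using 2 <;> ring) (by simpa using ih₀)
  | neg_add_one n ih₀ ih₁ =>
    convert backward (-n + 1) ih₁ (by simpa using ih₀) using 2 <;> ring

theorem map_val_zpow {M N F : Type*} [Monoid M] [Monoid N] [FunLike F M N] [MonoidHomClass F M N]
    {f : F} {u : Mˣ} {v : Nˣ} (h : f u = v) (n : ℤ) : f ↑(u ^ n) = ↑(v ^ n) := by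
  have map_u : Units.map (f : M →* N) u = v := Units.ext h
  rw [← map_u, ← map_zpow, Units.coe_map, MonoidHom.coe_coe]

section CommRing

variable {B : Type*} [CommRing B] {c : Bˣ} {x : B}

/-- The analogue of `IsP` in a commutative ring `B`: the unit `c` stands for `A` and the element
`x` for `t`. -/
def IsPAt (c : Bˣ) (x : B) (P : ℤ → B) : Prop :=
  P 0 = -(c : B) ^ 2 - (↑c⁻¹ : B) ^ 2 ∧ P 1 = -(c : B) ^ 3 * x ∧
    ∀ n : ℤ, P n = c * x * P (n - 1) - (c : B) ^ 2 * P (n - 2)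

theorem zpow_mul_recurrence {Q : ℤ → B} (hQ : ∀ n, Q n = x * Q (n - 1) - Q (n - 2)) (n : ℤ) :
    ↑(c ^ n) * Q n =
      c * x * (↑(c ^ (n - 1)) * Q (n - 1)) - (c : B) ^ 2 * (↑(c ^ (n - 2)) * Q (n - 2)) := by
  have zpow_eq_mul : (↑(c ^ n) : B) = c * ↑(c ^ (n - 1)) := by
    rw [← Units.val_mul, mul_self_zpow, sub_add_cancel]
  have zpow_eq_sq_mul : (↑(c ^ n) : B) = c ^ 2 * ↑(c ^ (n - 2)) := by
    rw [← Units.val_pow_eq_pow_val, ← Units.val_mul, ← zpow_natCast, ← zpow_add]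
    congr 2
    push_cast
    ring
  linear_combination ↑(c ^ n) * hQ n + x * Q (n - 1) * zpow_eq_mul - Q (n - 2) * zpow_eq_sq_mul

theorem eval_chebyshev_recurrence (x : B) (n : ℤ) :
    (Chebyshev.S B n).eval x =
      x * (Chebyshev.S B (n - 1)).eval x - (Chebyshev.S B (n - 2)).eval x := by
  simpa using congrArg (eval x) (Chebyshev.S_eq B n)

theorem map_eval_chebyshev {B' : Type*} [CommRing B'] (σ : B →+* B') (x : B) (n : ℤ) :
    σ ((Chebyshev.S B n).eval x) = (Chebyshev.S B' n).eval (σ x) := by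
  rw [← Chebyshev.map_S σ, eval_map_apply]

theorem IsPAt.eq_zpow_mul_chebyshev {P : ℤ → B} (hP : IsPAt c x P) (n : ℤ) :
    P n = ↑(c ^ n) * ((↑c⁻¹ : B) ^ 2 * (Chebyshev.S B (n - 2)).eval x -
      (c : B) ^ 2 * (Chebyshev.S B n).eval x) := by
  obtain ⟨h0, h1, hrec⟩ := hP
  have regular_sq : IsLeftRegular ((c : B) ^ 2) := (c.isUnit.pow 2).isRegular.left
  let Q (m : ℤ) : B :=
    (↑c⁻¹ : B) ^ 2 * (Chebyshev.S B (m - 2)).eval x - (c : B) ^ 2 * (Chebyshev.S B m).eval x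
  have hQ (m : ℤ) : Q m = x * Q (m - 1) - Q (m - 2) := by
    have hS := eval_chebyshev_recurrence x (m - 2)
    rw [sub_right_comm m 2 1] at hS
    linear_combination (↑c⁻¹ : B) ^ 2 * hS - (c : B) ^ 2 * eval_chebyshev_recurrence x m
  refine congrFun (eq_of_linear_recurrence (g := fun m ↦ ↑(c ^ m) * Q m) regular_sq hrec
    (zpow_mul_recurrence hQ) ?_ ?_) n
  · simp only [Q, h0, zpow_zero, Units.val_one, zero_sub, Chebyshev.S_neg_two, Chebyshev.S_zero,
      eval_neg, eval_one]
    ring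
  · simp only [Q, h1, zpow_one, Int.reduceSub, Chebyshev.S_neg_one, Chebyshev.S_one, eval_zero,
      eval_X]
    ring

theorem stmt_0_general {P : ℤ → B} (hP : IsPAt c x P) {σ : B →+* B} (hσc : σ c = ↑c⁻¹)
    (hσx : σ x = x) (n : ℤ) : σ (P n) = P (-n) := by
  have hσ_zpow (k : ℤ) : σ ↑(c ^ k) = ↑(c ^ (-k)) := by
    rw [map_val_zpow hσc, inv_zpow']
  have hσ_inv : σ ↑c⁻¹ = c := by
    simpa using hσ_zpow (-1)
  rw [hP.eq_zpow_mul_chebyshev n, hP.eq_zpow_mul_chebyshev (-n),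
    Chebyshev.S_neg_sub_two, Chebyshev.S_neg]
  simp only [map_mul, map_sub, map_pow, hσ_zpow, hσc, hσ_inv, map_eval_chebyshev, hσx,
    eval_neg]
  ring

end CommRing

/-- The Laurent variable `A` as a unit of `R[t]`. -/
def laurentUnit : R[X]ˣ where
  val := C (T 1)
  inv := C (T (-1))
  val_inv := by
    rw [← C_mul, ← LaurentPolynomial.T_add, add_neg_cancel, LaurentPolynomial.T_zero, C_1]
  inv_val := by
    rw [← C_mul, ← LaurentPolynomial.T_add, neg_add_cancel, LaurentPolynomial.T_zero, C_1]

theorem IsP.isPAt {P : ℤ → R[X]} (hP : IsP P) : IsPAt laurentUnit X P := by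
  simpa [IsP, IsPAt, laurentUnit, ← C_pow, LaurentPolynomial.T_pow] using hP

theorem stmt_0 (P : ℤ → R[X]) (hP : IsP P)
    (σ : R →+* R) (hσ : σ (T 1) = T (-1)) :
    ∀ n : ℤ, (P n).map σ = P (-n) := by
  have map_laurentUnit : mapRingHom σ laurentUnit = ↑laurentUnit⁻¹ := by
    simp [laurentUnit, hσ]
  exact stmt_0_general hP.isPAt map_laurentUnit (map_X σ)
end
end

section
/- For every integer n ≥ 0, P_n = −A^{n+2}·Q_n + A^{n−2}·Q_{n−2} and P_{−n} = −A^{−n−2}·Q_n + A^{−n+2}·Q_{n−2} in R[t]. -/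
open Polynomial
open LaurentPolynomial (T)

noncomputable section

/-- `Q` is the family of polynomials `Q n ∈ R[t]` (for `n ≥ -2`) defined by `Q (-2) = -1`,
`Q (-1) = 0` and the recurrence `Q n = t Q (n-1) - Q (n-2)` for `n ≥ 0`. -/
def IsQ (Q : ℤ → R[X]) : Prop :=
  Q (-2) = -1 ∧ Q (-1) = 0 ∧ ∀ n : ℤ, 0 ≤ n → Q n = X * Q (n - 1) - Q (n - 2)

/-!
Dividing `P n` by `A ^ n` turns its recurrence into the Chebyshev one,
`f (n + 2) = t f (n + 1) - f n`, which runs in both directions over `ℤ` and whose solutions are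
`f n = S (n - 1) f 1 - S (n - 2) f 0`, with `S` the rescaled Chebyshev polynomials of the second
kind. The initial values of `P` then give `P n = -A ^ (n + 2) S n + A ^ (n - 2) S (n - 2)` for every
`n : ℤ`. Since `Q n = S n` for `n ≥ -2`, this is the first identity, and the reflection
`S (-n) = -S (n - 2)` turns its instance at `-n` into the second.
-/

section ChebyshevRecurrence

variable {B M : Type*} [CommRing B] [AddCommGroup M] [Module B M] (x : B)

theorem S_eval_eq (n : ℤ) : (Chebyshev.S B n).eval x =
    x * (Chebyshev.S B (n - 1)).eval x - (Chebyshev.S B (n - 2)).eval x := by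
  simpa only [eval_sub, eval_mul, eval_X] using congrArg (eval x) (Chebyshev.S_eq B n)

theorem eq_S_eval_smul_sub_of_nat_recurrence {f : ℕ → M}
    (hf : ∀ n, f (n + 2) = x • f (n + 1) - f n) (n : ℕ) :
    f n = (Chebyshev.S B (n - 1)).eval x • f 1 - (Chebyshev.S B (n - 2)).eval x • f 0 := by
  induction n using Nat.twoStepInduction with
  | zero => simp
  | one => simp [show (1 - 2 : ℤ) = -1 by norm_num]
  | more n ih₀ ih₁ =>
    have hS := S_eval_eq x (n + 1)
    rw [add_sub_cancel_right, show (n + 1 - 2 : ℤ) = n - 1 by ring] at hS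
    rw [hf, ih₁, ih₀, show ((n + 2 : ℕ) - 1 : ℤ) = n + 1 by push_cast; ring,
      show ((n + 2 : ℕ) - 2 : ℤ) = n by simp, show ((n + 1 : ℕ) - 1 : ℤ) = n by simp,
      show ((n + 1 : ℕ) - 2 : ℤ) = n - 1 by push_cast; ring]
    linear_combination (norm := module) S_eval_eq x (n : ℤ) • f 0 - hS • f 1

theorem eq_S_eval_smul_sub_of_int_recurrence {f : ℤ → M}
    (hf : ∀ n, f (n + 2) = x • f (n + 1) - f n) (n : ℤ) :
    f n = (Chebyshev.S B (n - 1)).eval x • f 1 - (Chebyshev.S B (n - 2)).eval x • f 0 := by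
  have hf_neg (m : ℤ) : f (-(m + 2)) = x • f (-(m + 1)) - f (-m) := by
    have h := hf (-(m + 2))
    rw [show -(m + 2) + 2 = -m by ring, show -(m + 2) + 1 = -(m + 1) by ring] at h
    rw [h, sub_sub_cancel]
  obtain ⟨n, rfl | rfl⟩ := n.eq_nat_or_neg
  · exact eq_S_eval_smul_sub_of_nat_recurrence x (f := fun k ↦ f k) (fun k ↦ hf k) n
  · have hf_neg_one : f (-1) = x • f 0 - f 1 := by simpa using hf_neg (-1)
    calc f (-n)
        = (Chebyshev.S B (n - 1)).eval x • f (-1) - (Chebyshev.S B (n - 2)).eval x • f 0 :=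
          eq_S_eval_smul_sub_of_nat_recurrence x (f := fun k ↦ f (-k)) (fun k ↦ hf_neg k) n
      _ = (Chebyshev.S B (-n - 1)).eval x • f 1 - (Chebyshev.S B (-n - 2)).eval x • f 0 := by
          rw [hf_neg_one, Chebyshev.S_neg_sub_one, Chebyshev.S_neg_sub_two, eval_neg, eval_neg,
            S_eval_eq x n]
          module

theorem eq_S_eval_of_recurrence {Q : ℤ → B} (hQ_neg_two : Q (-2) = -1) (hQ_neg_one : Q (-1) = 0)
    (hQ : ∀ n, 0 ≤ n → Q n = x * Q (n - 1) - Q (n - 2)) {n : ℤ} (hn : -2 ≤ n) :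
    Q n = (Chebyshev.S B n).eval x := by
  obtain ⟨k, rfl⟩ : ∃ k : ℕ, n = k - 2 := ⟨(n + 2).toNat, by lia⟩
  have hQ_shift (j : ℕ) : Q ((j + 2 : ℕ) - 2) = x • Q ((j + 1 : ℕ) - 2) - Q (j - 2) := by
    have h := hQ j (by positivity)
    push_cast
    rwa [add_sub_cancel_right, show (j + 1 - 2 : ℤ) = j - 1 by ring]
  have h := eq_S_eval_smul_sub_of_nat_recurrence x (f := fun j ↦ Q (j - 2)) hQ_shift k
  simpa [hQ_neg_two, hQ_neg_one] using h

theorem eq_zpow_smul_S_eval_smul_sub_of_recurrence (a : Bˣ) {f : ℤ → M}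
    (hf : ∀ n, f n = (a * x) • f (n - 1) - a ^ (2 : ℤ) • f (n - 2)) (n : ℤ) :
    f n = a ^ n • ((Chebyshev.S B (n - 1)).eval x • a⁻¹ • f 1 -
      (Chebyshev.S B (n - 2)).eval x • f 0) := by
  have hscaled (m : ℤ) :
      a ^ (-(m + 2)) • f (m + 2) = x • a ^ (-(m + 1)) • f (m + 1) - a ^ (-m) • f m := by
    rw [hf (m + 2), show m + 2 - 1 = m + 1 by ring, add_sub_cancel_right,
      show a ^ (-(m + 1)) = a ^ (-(m + 2)) * a by rw [← zpow_add_one]; ring_nf,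
      show a ^ (-m) = a ^ (-(m + 2)) * a ^ (2 : ℤ) by rw [← zpow_add]; ring_nf]
    simp only [Units.smul_def, Units.val_mul]
    module
  have h := eq_S_eval_smul_sub_of_int_recurrence x (f := fun m ↦ a ^ (-m) • f m) hscaled n
  rw [zpow_neg, inv_smul_eq_iff] at h
  simpa using h

theorem eq_neg_zpow_mul_S_eval_add_of_recurrence (a : Bˣ) {P : ℤ → B}
    (hP_zero : P 0 = -(a ^ (2 : ℤ) : Bˣ) - (a ^ (-2 : ℤ) : Bˣ))
    (hP_one : P 1 = -(a ^ (3 : ℤ) : Bˣ) * x)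
    (hP : ∀ n, P n = a * x * P (n - 1) - (a ^ (2 : ℤ) : Bˣ) * P (n - 2)) (n : ℤ) :
    P n = -(a ^ (n + 2) : Bˣ) * (Chebyshev.S B n).eval x +
      (a ^ (n - 2) : Bˣ) * (Chebyshev.S B (n - 2)).eval x := by
  have hcube : ((a⁻¹ : Bˣ) : B) * (a ^ (3 : ℤ) : Bˣ) = (a ^ (2 : ℤ) : Bˣ) := by
    rw [← Units.val_mul, ← zpow_neg_one, ← zpow_add]; norm_num
  rw [eq_zpow_smul_S_eval_smul_sub_of_recurrence x a hP n, hP_zero, hP_one, S_eval_eq x n,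
    sub_eq_add_neg n 2, zpow_add, zpow_add, Units.val_mul, Units.val_mul]
  simp only [Units.smul_def, smul_eq_mul]
  linear_combination -(a ^ n : Bˣ) * x * (Chebyshev.S B (n - 1)).eval x * hcube

theorem stmt_1_general (a : Bˣ) {P Q : ℤ → B}
    (hP_zero : P 0 = -(a ^ (2 : ℤ) : Bˣ) - (a ^ (-2 : ℤ) : Bˣ))
    (hP_one : P 1 = -(a ^ (3 : ℤ) : Bˣ) * x)
    (hP : ∀ n, P n = a * x * P (n - 1) - (a ^ (2 : ℤ) : Bˣ) * P (n - 2))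
    (hQ_neg_two : Q (-2) = -1) (hQ_neg_one : Q (-1) = 0)
    (hQ : ∀ n, 0 ≤ n → Q n = x * Q (n - 1) - Q (n - 2)) (n : ℤ) (hn : 0 ≤ n) :
    P n = -(a ^ (n + 2) : Bˣ) * Q n + (a ^ (n - 2) : Bˣ) * Q (n - 2) ∧
      P (-n) = -(a ^ (-n - 2) : Bˣ) * Q n + (a ^ (-n + 2) : Bˣ) * Q (n - 2) := by
  have hPS := eq_neg_zpow_mul_S_eval_add_of_recurrence x a hP_zero hP_one hP
  have hQS {m : ℤ} (hm : -2 ≤ m) : Q m = (Chebyshev.S B m).eval x :=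
    eq_S_eval_of_recurrence x hQ_neg_two hQ_neg_one hQ hm
  rw [hQS (by lia : -2 ≤ n), hQS (by lia : -2 ≤ n - 2)]
  refine ⟨hPS n, ?_⟩
  rw [hPS (-n), Chebyshev.S_neg, Chebyshev.S_neg_sub_two, eval_neg, eval_neg]
  ring

end ChebyshevRecurrence

theorem exists_unit_zpow_eq_C_T (B : Type*) [Semiring B] :
    ∃ a : (LaurentPolynomial B)[X]ˣ, ∀ n : ℤ, ((a ^ n : (LaurentPolynomial B)[X]ˣ) :
      (LaurentPolynomial B)[X]) = C (T n) := by
  let φ : Multiplicative ℤ →* (LaurentPolynomial B)[X] :=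
    (C : LaurentPolynomial B →+* _).toMonoidHom.comp (AddMonoidAlgebra.of B ℤ)
  refine ⟨φ.toHomUnits (Multiplicative.ofAdd 1), fun n ↦ ?_⟩
  rw [← map_zpow, ← ofAdd_zsmul, zsmul_one]
  rfl

theorem stmt_1 (P : ℤ → R[X]) (hP : IsP P) (Q : ℤ → R[X]) (hQ : IsQ Q) :
    ∀ n : ℤ, 0 ≤ n →
      P n = C (-T (n + 2)) * Q n + C (T (n - 2)) * Q (n - 2) ∧
      P (-n) = C (-T (-n - 2)) * Q n + C (T (-n + 2)) * Q (n - 2) := by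
  obtain ⟨a, ha⟩ := exists_unit_zpow_eq_C_T ℤ
  simp only [IsP, IsQ, C_neg, C_sub, ← ha, zpow_one] at hP hQ ⊢
  exact stmt_1_general X a hP.1 hP.2.1 hP.2.2 hQ.1 hQ.2.1 hQ.2.2
end
end

section
/- For every integer n ≥ 2, the identity (A·P_{n−2} + A⁻¹·P_{−n+2}) − (A·P_{−n} + A⁻¹·P_n) = (A^{n+1}+A^{−n−1})(Q_n − Q_{n−2}) − (A^{n−3}+A^{−n+3})(Q_{n−2} − Q_{n−4}) holds in R[t]. -/
open Polynomial
open LaurentPolynomial (T)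

noncomputable section

/-!
Rescaling `P n` by `A ^ (-n)` turns its recurrence into the Chebyshev recurrence
`f n = t f (n - 1) - f (n - 2)` over all of `ℤ`, so
`P n = A ^ (n - 2) S (n - 2) - A ^ (n + 2) S n`, where `S` extends `Q` to all of `ℤ`.
Consequently `A P (n - 2) - A⁻¹ P n = A ^ (n + 1) C n - A ^ (n - 3) C (n - 2)` with the first-kind
polynomials `C n = S n - S (n - 2)`, which are even in `n`. The identity is the difference of the
formulas for `A P (n - 2) - A⁻¹ P n` at `n` and at `2 - n`.
-/

section ChebyshevRecurrence

theorem chebyshevC_eq_S_sub_S (K : Type*) [CommRing K] (n : ℤ) :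
    Chebyshev.C K n = Chebyshev.S K n - Chebyshev.S K (n - 2) := by
  linear_combination Chebyshev.C_eq_S_sub_X_mul_S K n + Chebyshev.S_eq K n

variable {K : Type*} [CommRing K]

theorem eval_chebyshevS_eq (x : K) (n : ℤ) :
    (Chebyshev.S K n).eval x =
      x * (Chebyshev.S K (n - 1)).eval x - (Chebyshev.S K (n - 2)).eval x := by
  rw [Chebyshev.S_eq, eval_sub, eval_mul, eval_X]

variable {x : K}

theorem eq_eval_chebyshevS_of_recurrence {f : ℤ → K}
    (hf : ∀ n, f n = x * f (n - 1) - f (n - 2)) (n : ℤ) :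
    f n = f 1 * (Chebyshev.S K (n - 1)).eval x - f 0 * (Chebyshev.S K (n - 2)).eval x := by
  induction n using Chebyshev.induct with
  | zero => simp
  | one => simp
  | add_two n ih₁ ih₀ =>
    linear_combination (norm := ring_nf) hf (n + 2) + x * ih₁ - ih₀
      - f 1 * eval_chebyshevS_eq x (n + 1) + f 0 * eval_chebyshevS_eq x n
  | neg_add_one n ih₀ ih₁ =>
    linear_combination (norm := ring_nf) hf (-n + 1) + x * ih₀ - ih₁
      - f 1 * eval_chebyshevS_eq x (-n) + f 0 * eval_chebyshevS_eq x (-n - 1)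

theorem eq_eval_chebyshevS_of_nonneg_recurrence {q : ℤ → K} (h_neg_two : q (-2) = -1)
    (h_neg_one : q (-1) = 0) (hq : ∀ n, 0 ≤ n → q n = x * q (n - 1) - q (n - 2))
    {n : ℤ} (hn : -2 ≤ n) : q n = (Chebyshev.S K n).eval x := by
  suffices q n = (Chebyshev.S K n).eval x ∧ q (n + 1) = (Chebyshev.S K (n + 1)).eval x from this.1
  induction n, hn using Int.leInduction with
  | base => simp [h_neg_two, h_neg_one]
  | succ n hn ih =>
    refine ⟨ih.2, ?_⟩
    rw [hq _ (by lia), eval_chebyshevS_eq, show n + 1 + 1 - 1 = n + 1 by ring,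
      show n + 1 + 1 - 2 = n by ring, ih.1, ih.2]

end ChebyshevRecurrence

/-- The two-sided sequences `p` with the initial values and the recurrence of `P`, where the
variables `A` and `t` are specialised to a unit `a` and an element `x` of a commutative ring. -/
structure IsBracketSequence {K : Type*} [CommRing K] (a : Kˣ) (x : K) (p : ℤ → K) : Prop where
  zero : p 0 = -(a : K) ^ 2 - (↑a⁻¹ : K) ^ 2
  one : p 1 = -(a : K) ^ 3 * x
  recurrence (n : ℤ) : p n = a * x * p (n - 1) - (a : K) ^ 2 * p (n - 2)

namespace IsBracketSequence

variable {K : Type*} [CommRing K] {a : Kˣ} {x : K} {p : ℤ → K}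

theorem rescaled_recurrence (hp : IsBracketSequence a x p) (n : ℤ) :
    ↑(a ^ (-n)) * p n = x * (↑(a ^ (-(n - 1))) * p (n - 1)) - ↑(a ^ (-(n - 2))) * p (n - 2) := by
  have h₁ : a ^ (-(n - 1)) = a ^ (-n) * a := by group
  have h₂ : a ^ (-(n - 2)) = a ^ (-n) * a ^ 2 := by group
  rw [h₁, h₂, hp.recurrence n]
  push_cast
  ring

theorem eq_eval_chebyshevS (hp : IsBracketSequence a x p) (n : ℤ) :
    p n = ↑(a ^ (n - 2)) * (Chebyshev.S K (n - 2)).eval x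
      - ↑(a ^ (n + 2)) * (Chebyshev.S K n).eval x := by
  have h_rescaled : ↑(a ^ (-n)) * p n =
      (↑a⁻¹ : K) ^ 2 * (Chebyshev.S K (n - 2)).eval x - (a : K) ^ 2 * (Chebyshev.S K n).eval x := by
    have h_solution := eq_eval_chebyshevS_of_recurrence hp.rescaled_recurrence n
    simp only [hp.zero, hp.one, neg_zero, zpow_zero, Units.val_one, zpow_neg_one] at h_solution
    linear_combination h_solution + (a : K) ^ 2 * eval_chebyshevS_eq x n
      - (a : K) ^ 2 * x * (Chebyshev.S K (n - 1)).eval x * a.inv_mul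
  have h₁ : a ^ (n - 2) = a ^ n * a⁻¹ ^ 2 := by group
  have h₂ : a ^ (n + 2) = a ^ n * a ^ 2 := by group
  rw [zpow_neg, Units.inv_mul_eq_iff_eq_mul] at h_rescaled
  rw [h_rescaled, h₁, h₂]
  push_cast
  ring

theorem mul_sub_inv_mul_eq_eval_chebyshevC (hp : IsBracketSequence a x p) (n : ℤ) :
    a * p (n - 2) - ↑a⁻¹ * p n = ↑(a ^ (n + 1)) * (Chebyshev.C K n).eval x
      - ↑(a ^ (n - 3)) * (Chebyshev.C K (n - 2)).eval x := by
  have h₁ : a ^ (n + 1) = a * a ^ n := by group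
  have h₂ : a ^ (n + 1) = a⁻¹ * a ^ (n + 2) := by group
  have h₃ : a ^ (n - 3) = a * a ^ (n - 4) := by group
  have h₄ : a ^ (n - 3) = a⁻¹ * a ^ (n - 2) := by group
  have h_prev := hp.eq_eval_chebyshevS (n - 2)
  rw [show n - 2 - 2 = n - 4 by ring, show n - 2 + 2 = n by ring] at h_prev
  calc a * p (n - 2) - ↑a⁻¹ * p n
      = ↑(a * a ^ (n - 4)) * (Chebyshev.S K (n - 4)).eval x
          - ↑(a * a ^ n) * (Chebyshev.S K (n - 2)).eval x
          - (↑(a⁻¹ * a ^ (n - 2)) * (Chebyshev.S K (n - 2)).eval x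
            - ↑(a⁻¹ * a ^ (n + 2)) * (Chebyshev.S K n).eval x) := by
        rw [h_prev, hp.eq_eval_chebyshevS n]
        push_cast
        ring
    _ = ↑(a ^ (n + 1)) * (Chebyshev.C K n).eval x
          - ↑(a ^ (n - 3)) * (Chebyshev.C K (n - 2)).eval x := by
        rw [← h₁, ← h₂, ← h₃, ← h₄, chebyshevC_eq_S_sub_S, chebyshevC_eq_S_sub_S,
          show n - 2 - 2 = n - 4 by ring, eval_sub, eval_sub]
        ring

end IsBracketSequence

theorem stmt_2_general {K : Type*} [CommRing K] {a : Kˣ} {x : K} {p : ℤ → K}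
    (hp : IsBracketSequence a x p) (n : ℤ) :
    (a * p (n - 2) + ↑a⁻¹ * p (-n + 2)) - (a * p (-n) + ↑a⁻¹ * p n) =
      (↑(a ^ (n + 1)) + ↑(a ^ (-n - 1))) *
          ((Chebyshev.S K n).eval x - (Chebyshev.S K (n - 2)).eval x) -
        (↑(a ^ (n - 3)) + ↑(a ^ (-n + 3))) *
          ((Chebyshev.S K (n - 2)).eval x - (Chebyshev.S K (n - 4)).eval x) := by
  have h_reflect := hp.mul_sub_inv_mul_eq_eval_chebyshevC (-n + 2)
  rw [show -n + 2 - 2 = -n by ring, show -n + 2 + 1 = -n + 3 by ring,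
    show -n + 2 - 3 = -n - 1 by ring, show -n + 2 = -(n - 2) by ring,
    Chebyshev.C_neg, Chebyshev.C_neg] at h_reflect
  rw [show n - 4 = n - 2 - 2 by ring, ← eval_sub, ← eval_sub, ← chebyshevC_eq_S_sub_S,
    ← chebyshevC_eq_S_sub_S, show -n + 2 = -(n - 2) by ring]
  linear_combination hp.mul_sub_inv_mul_eq_eval_chebyshevC n - h_reflect

section LaurentVariable

/-- The variable `A` of `R = ℤ[A, A⁻¹]`, as a unit of `R[t]`. -/
def unitA : R[X]ˣ where
  val := C (T 1)
  inv := C (T (-1))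
  val_inv := by
    rw [← C_mul, ← LaurentPolynomial.T_add, add_neg_cancel, LaurentPolynomial.T_zero, C_1]
  inv_val := by
    rw [← C_mul, ← LaurentPolynomial.T_add, neg_add_cancel, LaurentPolynomial.T_zero, C_1]

theorem val_unitA_zpow (n : ℤ) : ((unitA ^ n : R[X]ˣ) : R[X]) = C (T n) := by
  induction n with
  | zero => simp
  | succ n ih =>
    rw [zpow_add_one, Units.val_mul, ih, LaurentPolynomial.T_add, C_mul]
    rfl
  | pred n ih =>
    rw [zpow_sub_one, Units.val_mul, ih, sub_eq_add_neg, LaurentPolynomial.T_add, C_mul]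
    rfl

theorem IsP.isBracketSequence {P : ℤ → R[X]} (hP : IsP P) : IsBracketSequence unitA X P := by
  obtain ⟨h_zero, h_one, h_rec⟩ := hP
  have h_pow (n : ℕ) : (unitA : R[X]) ^ n = C (T n) := by
    rw [← val_unitA_zpow, zpow_natCast, Units.val_pow_eq_pow_val]
  have h_inv_sq : (↑unitA⁻¹ : R[X]) ^ 2 = C (T (-2)) := by
    rw [← val_unitA_zpow, zpow_neg, ← inv_zpow]; norm_cast
  constructor
  · rw [h_zero, h_pow, h_inv_sq, C_sub, C_neg]; rfl
  · rw [h_one, h_pow, C_neg]; rfl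
  · intro n
    rw [h_pow]
    exact h_rec n

theorem IsQ.eq_eval_chebyshevS {Q : ℤ → R[X]} (hQ : IsQ Q) {n : ℤ} (hn : -2 ≤ n) :
    Q n = (Chebyshev.S R[X] n).eval X :=
  eq_eval_chebyshevS_of_nonneg_recurrence hQ.1 hQ.2.1 hQ.2.2 hn

end LaurentVariable

theorem stmt_2 (P : ℤ → R[X]) (hP : IsP P) (Q : ℤ → R[X]) (hQ : IsQ Q) :
    ∀ n : ℤ, 2 ≤ n →
      (C (T 1) * P (n - 2) + C (T (-1)) * P (-n + 2)) -
        (C (T 1) * P (-n) + C (T (-1)) * P n) =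
      C (T (n + 1) + T (-n - 1)) * (Q n - Q (n - 2)) -
        C (T (n - 3) + T (-n + 3)) * (Q (n - 2) - Q (n - 4)) := by
  intro n hn
  rw [hQ.eq_eval_chebyshevS (n := n) (by lia), hQ.eq_eval_chebyshevS (n := n - 2) (by lia),
    hQ.eq_eval_chebyshevS (n := n - 4) (by lia)]
  simpa only [C_add, ← val_unitA_zpow, zpow_one, zpow_neg_one] using
    stmt_2_general hP.isBracketSequence n
end
end

section
/- For every integer n ≥ 2 and every integer i with 1 ≤ i ≤ n/2, the element (A^{n+1}+A^{−n−1})(Q_n − Q_{n−2i}) − q_{n,i}·(Q_{n−2i} − Q_{n−2i−2}) of R[t] lies in the R-submodule of R[t] generated by the elements r'_k for 2 ≤ k ≤ n, where q_{n,i} = ∑_{k=1}^{i} (A^{n−4k+1} + A^{−n+4k−1}). -/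
open Polynomial
open LaurentPolynomial (T)

noncomputable section

/-!
Write `D k = Q k - Q (k - 2)` and `s k = A ^ k + A ^ (-k)`, so that
`r'_k = s (k + 1) D k - s (k - 3) D (k - 2)`. Multiplying a value of `s` by the quantum integer
`[m]` in `A ^ 2` gives a sum of values of `s` along an arithmetic progression of step `4`; therefore
`[j + 1] s (n - 2 j + 1) = s (n + 1) + q_{n,j}` and `[j + 1] s (n - 2 j - 3) = q_{n,j+1}`. Hence
`[j + 1] r'_{n - 2 j} = s (n + 1) D (n - 2 j) + (q_{n,j} D (n - 2 j) - q_{n,j+1} D (n - 2 j - 2))`,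
and both parts telescope when summed over `0 ≤ j < i`.
-/

theorem sum_Icc_one_natCast {M : Type*} [AddCommMonoid M] (f : ℤ → M) (m : ℕ) :
    ∑ k ∈ Finset.Icc (1 : ℤ) m, f k = ∑ k ∈ Finset.range m, f (k + 1) := by
  simp [Int.Icc_eq_finset_map, Finset.sum_map, add_comm]

section AddChar

variable {S : Type*} [Semiring S] (τ : AddChar ℤ S)

/-- The symmetrized power `a ^ n + a ^ (-n)` of a unit `a`. Throughout, a unit `a` is
encoded by the additive character `τ n = a ^ n` of `ℤ`. -/
def symmetrizedPow (n : ℤ) : S := τ n + τ (-n)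

/-- The quantum integer `[m] = q ^ (m - 1) + q ^ (m - 3) + ⋯ + q ^ (1 - m)` at `q = a ^ 2`, where
`τ n = a ^ n`. -/
def quantumInt (m : ℕ) : S := ∑ k ∈ Finset.range m, τ (2 * (m - 1) - 4 * k)

/-- The coefficient `q_{n,m} = ∑_{k=1}^m (a ^ (n - 4k + 1) + a ^ (-n + 4k - 1))`, with the summation
index shifted to start at `0`. -/
def reductionCoeff (n : ℤ) (m : ℕ) : S :=
  ∑ k ∈ Finset.range m, symmetrizedPow τ (n - 4 * k - 3)

theorem reductionCoeff_eq_sum_Icc (n : ℤ) (m : ℕ) :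
    reductionCoeff τ n m = ∑ k ∈ Finset.Icc (1 : ℤ) m, symmetrizedPow τ (n - 4 * k + 1) := by
  rw [sum_Icc_one_natCast, reductionCoeff]
  exact Finset.sum_congr rfl fun k _ => congrArg _ (by ring)

theorem reductionCoeff_add_four (n : ℤ) (m : ℕ) :
    reductionCoeff τ (n + 4) (m + 1) = symmetrizedPow τ (n + 1) + reductionCoeff τ n m := by
  rw [reductionCoeff, Finset.sum_range_succ', add_comm]
  refine congrArg₂ _ (congrArg _ (by push_cast; ring)) ?_
  exact Finset.sum_congr rfl fun k _ => congrArg _ (by push_cast; ring)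

theorem quantumInt_eq_sum_neg (m : ℕ) :
    quantumInt τ m = ∑ k ∈ Finset.range m, τ (-(2 * (m - 1) - 4 * k)) := by
  rw [quantumInt, ← Finset.sum_range_reflect]
  refine Finset.sum_congr rfl fun k hk => congrArg τ ?_
  have := Finset.mem_range.1 hk
  omega

theorem quantumInt_mul_symmetrizedPow (m : ℕ) (c : ℤ) :
    quantumInt τ m * symmetrizedPow τ c =
      ∑ k ∈ Finset.range m, symmetrizedPow τ (c + 2 * (m - 1) - 4 * k) := by
  simp only [symmetrizedPow, Finset.sum_add_distrib, mul_add]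
  congr 1
  · rw [quantumInt, Finset.sum_mul]
    simp only [← AddChar.map_add_eq_mul]
    exact Finset.sum_congr rfl fun k _ => congrArg τ (by ring)
  · rw [quantumInt_eq_sum_neg, Finset.sum_mul]
    simp only [← AddChar.map_add_eq_mul]
    exact Finset.sum_congr rfl fun k _ => congrArg τ (by ring)

theorem quantumInt_mul_symmetrizedPow_eq_reductionCoeff (n : ℤ) (m : ℕ) :
    quantumInt τ m * symmetrizedPow τ (n - 2 * m - 1) = reductionCoeff τ n m := by
  rw [quantumInt_mul_symmetrizedPow, reductionCoeff]
  exact Finset.sum_congr rfl fun k _ => congrArg _ (by ring)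

section Module

variable {M : Type*} [AddCommGroup M] [Module S M] (Q : ℤ → M)

/-- The relator `r'_k` attached to a sequence `Q` in a module. -/
def relator (k : ℤ) : M :=
  symmetrizedPow τ (k + 1) • (Q k - Q (k - 2)) -
    symmetrizedPow τ (k - 3) • (Q (k - 2) - Q (k - 4))

/-- The element `s (n + 1) (Q n - Q (n - 2m)) - q_{n,m} (Q (n - 2m) - Q (n - 2m - 2))`, where
`s k = a ^ k + a ^ (-k)`, which is to be expressed through the relators. -/
def reduction (n : ℤ) (m : ℕ) : M :=
  symmetrizedPow τ (n + 1) • (Q n - Q (n - 2 * m)) -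
    reductionCoeff τ n m • (Q (n - 2 * m) - Q (n - 2 * m - 2))

theorem quantumInt_smul_relator (n : ℤ) (m : ℕ) :
    quantumInt τ (m + 1) • relator τ Q (n - 2 * m) =
      reduction τ Q n (m + 1) - reduction τ Q n m := by
  have hleft : quantumInt τ (m + 1) * symmetrizedPow τ (n - 2 * m + 1) =
      symmetrizedPow τ (n + 1) + reductionCoeff τ n m := by
    rw [← reductionCoeff_add_four, ← quantumInt_mul_symmetrizedPow_eq_reductionCoeff]
    congr 2; push_cast; ring
  have hright : quantumInt τ (m + 1) * symmetrizedPow τ (n - 2 * m - 3) =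
      reductionCoeff τ n (m + 1) := by
    rw [← quantumInt_mul_symmetrizedPow_eq_reductionCoeff]
    congr 2; push_cast; ring
  have hindex : n - 2 * ((m + 1 : ℕ) : ℤ) = n - 2 * m - 2 := by push_cast; ring
  have hindex' : n - 2 * (m : ℤ) - 2 - 2 = n - 2 * m - 4 := by ring
  rw [relator, smul_sub, smul_smul, smul_smul, hleft, hright, reduction, reduction, hindex, hindex']
  simp only [add_smul, smul_sub]
  abel

theorem reduction_eq_sum (n : ℤ) (m : ℕ) :
    reduction τ Q n m =
      ∑ j ∈ Finset.range m, quantumInt τ (j + 1) • relator τ Q (n - 2 * j) := by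
  have hzero : reduction τ Q n 0 = 0 := by simp [reduction, reductionCoeff]
  simp only [quantumInt_smul_relator, Finset.sum_range_sub, hzero, sub_zero]

theorem stmt_3_general (n i : ℤ) (hi : 0 ≤ i) :
    symmetrizedPow τ (n + 1) • (Q n - Q (n - 2 * i)) -
        (∑ k ∈ Finset.Icc (1 : ℤ) i, symmetrizedPow τ (n - 4 * k + 1)) •
          (Q (n - 2 * i) - Q (n - 2 * i - 2)) ∈
      Submodule.span S (relator τ Q '' Set.Icc (n - 2 * i + 2) n) := by
  lift i to ℕ using hi
  rw [← reductionCoeff_eq_sum_Icc, ← reduction, reduction_eq_sum]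
  refine Submodule.sum_smul_mem _ _ fun j hj => Submodule.subset_span ⟨_, ?_, rfl⟩
  have := Finset.mem_range.1 hj
  constructor <;> omega

end Module

end AddChar

/-- The additive character `n ↦ A ^ n` of the Laurent polynomial ring, given by its variable. -/
def laurentChar (K : Type*) [Semiring K] : AddChar ℤ (LaurentPolynomial K) where
  toFun := T
  map_zero_eq_one' := LaurentPolynomial.T_zero
  map_add_eq_mul' := LaurentPolynomial.T_add

theorem symmetrizedPow_laurentChar (K : Type*) [Semiring K] (n : ℤ) :
    symmetrizedPow (laurentChar K) n = T n + T (-n) :=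
  rfl

theorem stmt_3 (Q : ℤ → R[X]) (hQ : IsQ Q)
    (r' : ℤ → R[X])
    (hr' : ∀ k : ℤ, 2 ≤ k → r' k =
      C (T (k + 1) + T (-k - 1)) * (Q k - Q (k - 2)) -
        C (T (k - 3) + T (-k + 3)) * (Q (k - 2) - Q (k - 4)))
    (n i : ℤ) (hn : 2 ≤ n) (hi1 : 1 ≤ i) (hi2 : i ≤ n / 2) :
    C (T (n + 1) + T (-n - 1)) * (Q n - Q (n - 2 * i)) -
      C (∑ k ∈ Finset.Icc (1 : ℤ) i, (T (n - 4 * k + 1) + T (-n + 4 * k - 1))) *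
        (Q (n - 2 * i) - Q (n - 2 * i - 2)) ∈
      Submodule.span R (r' '' {k : ℤ | 2 ≤ k ∧ k ≤ n}) := by
  have hrel : Set.EqOn (relator (laurentChar ℤ) Q) r' {k | 2 ≤ k ∧ k ≤ n} := fun k hk => by
    simp only [hr' k hk.1, relator, symmetrizedPow_laurentChar, smul_eq_C_mul, neg_add', neg_sub',
      sub_neg_eq_add]
  have hsub : Set.Icc (n - 2 * i + 2) n ⊆ {k | 2 ≤ k ∧ k ≤ n} :=
    Set.Icc_subset_Icc_left (by omega)
  have hmem := stmt_3_general (laurentChar ℤ) Q n i (by omega)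
  simp only [symmetrizedPow_laurentChar, smul_eq_C_mul, neg_add', neg_sub', sub_neg_eq_add] at hmem
  rw [← hrel.image_eq]
  exact Submodule.span_mono (Set.image_mono hsub) hmem
end
end

section
/- Every element of the quotient R-module R[t]/S is the image of a unique element of R[t] of the form p_0 + p_1·t + ∑_{k=2}^{N} p_k·(Q_k − ε_k), where N ≥ 1, p_0, p_1 ∈ R, ε_k = 1 if k is even and ε_k = t if k is odd, and for each k ≥ 2 the coefficient p_k lies in ℤ[A] ⊂ R and has degree at most 2k+1 in A (with only finitely many p_k nonzero). -/
open Polynomial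
open LaurentPolynomial (T)

noncomputable section

/-! Two additive subgroups of a polynomial ring in `t` are complementary as soon as, for every `n`,
the coefficients of `t^n` in their elements of degree at most `n` form complementary subgroups of
the coefficient ring. Apply this to `S` and to the additive group of normal forms. For `n ≥ 2` the
coefficients are, respectively, the multiples of `A^(n+1) + A^(-n-1)`, which is a unit times
`A^(2n+2) + 1`, and the polynomials in `A` of degree at most `2n + 1`. These are complementary by
division with remainder: `A` is already invertible modulo `A^(2n+2) + 1`, so passing to Laurent
polynomials does not change the quotient. -/

section LeadingCoeffs

variable {A : Type*} [Ring A]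

/-- The additive group of coefficients of `X ^ n` in the elements of `V` of degree at most `n`; the
analogue of `Ideal.leadingCoeffNth` for additive subgroups. -/
def leadingCoeffs (V : AddSubgroup A[X]) (n : ℕ) : AddSubgroup A :=
  (V ⊓ (degreeLE A n).toAddSubgroup).map (lcoeff A n).toAddMonoidHom

theorem mem_leadingCoeffs {V : AddSubgroup A[X]} {n : ℕ} {a : A} :
    a ∈ leadingCoeffs V n ↔ ∃ f ∈ V, f.degree ≤ n ∧ f.coeff n = a := by
  simp [leadingCoeffs, mem_degreeLE, and_assoc]

theorem disjoint_of_leadingCoeffs {V W : AddSubgroup A[X]}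
    (h : ∀ n, Disjoint (leadingCoeffs V n) (leadingCoeffs W n)) : Disjoint V W := by
  refine AddSubgroup.disjoint_def.2 fun {f} hV hW ↦ leadingCoeff_eq_zero.1 ?_
  exact AddSubgroup.disjoint_def.1 (h f.natDegree)
    (mem_leadingCoeffs.2 ⟨f, hV, degree_le_natDegree, rfl⟩)
    (mem_leadingCoeffs.2 ⟨f, hW, degree_le_natDegree, rfl⟩)

theorem codisjoint_of_leadingCoeffs {V W : AddSubgroup A[X]}
    (h : ∀ n, Codisjoint (leadingCoeffs V n) (leadingCoeffs W n)) : Codisjoint V W := by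
  have mem_of_degree_lt : ∀ (n : ℕ) (f : A[X]), f.degree < n → f ∈ V ⊔ W := by
    intro n
    induction n with
    | zero =>
      intro f hf
      rw [show f = 0 by simpa using hf]
      exact zero_mem _
    | succ n ih =>
      intro f hf
      have hfn : f.coeff n ∈ leadingCoeffs V n ⊔ leadingCoeffs W n :=
        (h n).eq_top ▸ AddSubgroup.mem_top _
      obtain ⟨a, ha, b, hb, hab⟩ := AddSubgroup.mem_sup.1 hfn
      obtain ⟨v, hv, hvn, rfl⟩ := mem_leadingCoeffs.1 ha
      obtain ⟨w, hw, hwn, rfl⟩ := mem_leadingCoeffs.1 hb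
      have hvw : v + w ∈ V ⊔ W := AddSubgroup.add_mem_sup hv hw
      have hlt : (f - (v + w)).degree < n := by
        rw [degree_lt_iff_coeff_zero]
        intro m hm
        rcases hm.eq_or_lt with rfl | hm
        · simp [hab]
        · have hm' : (n : WithBot ℕ) < m := mod_cast hm
          rw [coeff_sub, coeff_add, coeff_eq_zero_of_degree_lt (hvn.trans_lt hm'),
            coeff_eq_zero_of_degree_lt (hwn.trans_lt hm'),
            coeff_eq_zero_of_degree_lt (hf.trans_le (mod_cast hm)), add_zero, sub_zero]
      simpa using add_mem (ih _ hlt) hvw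
  refine codisjoint_iff.2 (eq_top_iff.2 fun f _ ↦ mem_of_degree_lt (f.natDegree + 1) f ?_)
  exact degree_le_natDegree.trans_lt (mod_cast f.natDegree.lt_succ_self)

theorem isCompl_of_leadingCoeffs {V W : AddSubgroup A[X]}
    (h : ∀ n, IsCompl (leadingCoeffs V n) (leadingCoeffs W n)) : IsCompl V W :=
  ⟨disjoint_of_leadingCoeffs fun n ↦ (h n).disjoint,
    codisjoint_of_leadingCoeffs fun n ↦ (h n).codisjoint⟩

end LeadingCoeffs

section RestrictedSpan

variable {A : Type*} [Ring A] {D : ℕ → AddSubgroup A} {b : ℕ → A[X]}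

/-- The additive group of the finite linear combinations of the polynomials `b n` in which the
coefficient of `b n` is restricted to `D n`. -/
def restrictedSpan (D : ℕ → AddSubgroup A) (b : ℕ → A[X]) : AddSubgroup A[X] where
  carrier := {f | ∃ p : ℕ →₀ A, (∀ n, p n ∈ D n) ∧ Finsupp.linearCombination A b p = f}
  add_mem' := by
    rintro _ _ ⟨p, hp, rfl⟩ ⟨q, hq, rfl⟩
    exact ⟨p + q, fun n ↦ add_mem (hp n) (hq n), map_add _ _ _⟩
  zero_mem' := ⟨0, fun n ↦ zero_mem (D n), map_zero _⟩
  neg_mem' := by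
    rintro _ ⟨p, hp, rfl⟩
    exact ⟨-p, fun n ↦ neg_mem (hp n), map_neg _ _⟩

theorem C_mul_mem_restrictedSpan {n : ℕ} {d : A} (hd : d ∈ D n) :
    C d * b n ∈ restrictedSpan D b := by
  refine ⟨Finsupp.single n d, fun k ↦ ?_, by simp [smul_eq_C_mul]⟩
  rcases eq_or_ne n k with rfl | hk
  · simpa using hd
  · simp [Finsupp.single_eq_of_ne' hk, zero_mem]

theorem mem_restrictedSpan_iff_exists_sum_range (m : ℕ) {f : A[X]} :
    f ∈ restrictedSpan D b ↔ ∃ N ≥ m, ∃ p : ℕ → A,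
      (∀ n, p n ∈ D n) ∧ f = ∑ n ∈ Finset.range (N + 1), C (p n) * b n := by
  constructor
  · rintro ⟨p, hp, rfl⟩
    have support_subset : p.support ⊆ Finset.range (max m (p.support.sup id) + 1) := by
      intro n hn
      have : n ≤ p.support.sup id := Finset.le_sup (f := id) hn
      exact Finset.mem_range.2 (by omega)
    refine ⟨max m (p.support.sup id), le_max_left _ _, p, hp, ?_⟩
    rw [Finsupp.linearCombination_apply, Finsupp.sum_of_support_subset p support_subset _ (by simp)]
    simp only [smul_eq_C_mul]
  · rintro ⟨N, -, p, hp, rfl⟩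
    exact sum_mem fun n _ ↦ C_mul_mem_restrictedSpan (hp n)

theorem toAddSubgroup_span_image (g : ℕ → A[X]) (s : Set ℕ) [DecidablePred (· ∈ s)] :
    (Submodule.span A (g '' s)).toAddSubgroup =
      restrictedSpan (fun n ↦ if n ∈ s then ⊤ else ⊥) g := by
  ext f
  rw [Submodule.mem_toAddSubgroup, Finsupp.mem_span_image_iff_linearCombination]
  refine exists_congr fun p ↦ and_congr_left fun _ ↦ ?_
  rw [Finsupp.mem_supported']
  refine forall_congr' fun n ↦ ?_
  by_cases hn : n ∈ s <;> simp [hn]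

theorem degree_smul_le_degree_linearCombination {p : ℕ →₀ A}
    (hdeg : ∀ n, p n ≠ 0 → (p n • b n).degree = n) (n : ℕ) :
    (p n • b n).degree ≤ (Finsupp.linearCombination A b p).degree := by
  by_cases hn : p n = 0
  · simp [hn]
  have degrees_distinct :
      Set.Pairwise {k | k ∈ p.support ∧ p k • b k ≠ 0}
        (Function.onFun Ne (degree ∘ fun k ↦ p k • b k)) := by
    rintro k ⟨hk, -⟩ l ⟨hl, -⟩ hkl
    simpa [Function.onFun, hdeg k (Finsupp.mem_support_iff.1 hk),
      hdeg l (Finsupp.mem_support_iff.1 hl)] using hkl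
  rw [Finsupp.linearCombination_apply, Finsupp.sum,
    degree_sum_eq_of_disjoint _ _ degrees_distinct]
  exact Finset.le_sup (f := fun k ↦ (p k • b k).degree) (Finsupp.mem_support_iff.2 hn)

theorem leadingCoeffs_restrictedSpan
    (hdeg : ∀ n, ∀ d ∈ D n, d ≠ 0 → (d • b n).degree = n) (n : ℕ) :
    leadingCoeffs (restrictedSpan D b) n =
      (D n).map (AddMonoidHom.mulRight ((b n).coeff n)) := by
  ext a
  rw [mem_leadingCoeffs, AddSubgroup.mem_map]
  constructor
  · rintro ⟨_, ⟨p, hp, rfl⟩, hle, rfl⟩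
    refine ⟨p n, hp n, ?_⟩
    have coeff_eq_zero : ∀ k ≠ n, (p k • b k).coeff n = 0 := by
      intro k hkn
      by_cases hk : p k = 0
      · simp [hk]
      have hdegk := hdeg k _ (hp k) hk
      have hkle : (k : WithBot ℕ) ≤ n := hdegk ▸
        (degree_smul_le_degree_linearCombination (fun l ↦ hdeg l _ (hp l)) k).trans hle
      refine coeff_eq_zero_of_degree_lt (hdegk ▸ ?_)
      exact mod_cast lt_of_le_of_ne (mod_cast hkle) hkn
    rw [Finsupp.linearCombination_apply, Finsupp.sum, finsetSum_coeff,
      Finset.sum_eq_single n (fun k _ ↦ coeff_eq_zero k) (by simp +contextual)]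
    simp
  · rintro ⟨d, hd, rfl⟩
    refine ⟨C d * b n, C_mul_mem_restrictedSpan hd, ?_, by simp⟩
    by_cases h0 : d = 0
    · simp [h0]
    · rw [← smul_eq_C_mul, hdeg n d hd h0]

end RestrictedSpan

section Complements

open scoped nonZeroDivisors

variable {A : Type*} [Ring A]

theorem degree_smul_of_coeff_mem_nonZeroDivisors {f : A[X]} {n : ℕ} (hf : f.degree ≤ n)
    (hn : f.coeff n ∈ A⁰) {d : A} (hd : d ≠ 0) : (d • f).degree = n :=
  degree_eq_of_le_of_coeff_ne_zero ((degree_smul_le d f).trans hf) <| by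
    rw [coeff_smul, smul_eq_mul]
    exact fun h ↦ hd ((mul_right_mem_nonZeroDivisors_eq_zero_iff hn).1 h)

theorem leadingCoeffs_span_image {s : Set ℕ} [DecidablePred (· ∈ s)] {g : ℕ → A[X]}
    (hdeg : ∀ n ∈ s, (g n).degree ≤ n) (hcoeff : ∀ n ∈ s, (g n).coeff n ∈ A⁰) (n : ℕ) :
    leadingCoeffs (Submodule.span A (g '' s)).toAddSubgroup n =
      if n ∈ s then (Ideal.span {(g n).coeff n}).toAddSubgroup else ⊥ := by
  rw [toAddSubgroup_span_image, leadingCoeffs_restrictedSpan]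
  · split_ifs with hn
    · ext a
      simp [Ideal.mem_span_singleton']
    · simp
  · intro k d hd hd0
    have hk : k ∈ s := by
      by_contra hk
      exact hd0 (by simpa [hk] using hd)
    exact degree_smul_of_coeff_mem_nonZeroDivisors (hdeg k hk) (hcoeff k hk) hd0

theorem leadingCoeffs_restrictedSpan_of_isMonicOfDegree {D : ℕ → AddSubgroup A} {b : ℕ → A[X]}
    (hb : ∀ n, IsMonicOfDegree (b n) n) (n : ℕ) : leadingCoeffs (restrictedSpan D b) n = D n := by
  have hdeg (k) : (b k).degree ≤ k := degree_le_of_natDegree_le (hb k).natDegree_eq.le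
  have hcoeff (k) : (b k).coeff k = 1 := by
    simpa [(hb k).natDegree_eq] using (hb k).monic.coeff_natDegree
  rw [leadingCoeffs_restrictedSpan]
  · ext a
    simp [hcoeff]
  · intro k d _ hd0
    exact degree_smul_of_coeff_mem_nonZeroDivisors (hdeg k) (hcoeff k ▸ one_mem _) hd0

theorem isCompl_restrictedSpan_span {s : Set ℕ} {D : ℕ → AddSubgroup A} {b g : ℕ → A[X]}
    (hb : ∀ n, IsMonicOfDegree (b n) n) (hdeg : ∀ n ∈ s, (g n).degree ≤ n)
    (hcoeff : ∀ n ∈ s, (g n).coeff n ∈ A⁰)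
    (hD : ∀ n ∈ s, IsCompl (D n) (Ideal.span {(g n).coeff n}).toAddSubgroup)
    (hDtop : ∀ n ∉ s, D n = ⊤) :
    IsCompl (restrictedSpan D b) (Submodule.span A (g '' s)).toAddSubgroup := by
  classical
  refine isCompl_of_leadingCoeffs fun n ↦ ?_
  rw [leadingCoeffs_restrictedSpan_of_isMonicOfDegree hb, leadingCoeffs_span_image hdeg hcoeff]
  by_cases hn : n ∈ s
  · simpa only [if_pos hn] using hD n hn
  · simpa only [if_neg hn, hDtop n hn] using isCompl_top_bot

theorem degree_le_and_coeff_eq_of_degree_sub_smul_lt {f b : A[X]} {n : ℕ} {c : A}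
    (hb : IsMonicOfDegree b n) (h : (f - c • b).degree < n) : f.degree ≤ n ∧ f.coeff n = c := by
  have hbdeg : b.degree ≤ n := degree_le_of_natDegree_le hb.natDegree_eq.le
  have hbcoeff : b.coeff n = 1 := by simpa [hb.natDegree_eq] using hb.monic.coeff_natDegree
  constructor
  · rw [← sub_add_cancel f (c • b)]
    exact degree_add_le_of_degree_le h.le ((degree_smul_le _ _).trans hbdeg)
  · simpa [hbcoeff, sub_eq_zero] using coeff_eq_zero_of_degree_lt h

end Complements

theorem existsUnique_mem_mk_eq_of_isCompl {A M : Type*} [Ring A] [AddCommGroup M] [Module A M]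
    {V : AddSubgroup M} {S : Submodule A M} (h : IsCompl V S.toAddSubgroup) (x : M ⧸ S) :
    ∃! y : M, y ∈ V ∧ Submodule.Quotient.mk y = x := by
  obtain ⟨m, rfl⟩ := Submodule.Quotient.mk_surjective S x
  have hm : m ∈ V ⊔ S.toAddSubgroup := h.sup_eq_top ▸ AddSubgroup.mem_top m
  obtain ⟨v, hv, w, hw, rfl⟩ := AddSubgroup.mem_sup.1 hm
  refine ⟨v, ⟨hv, (Submodule.Quotient.eq S).2 (by simpa using hw)⟩, fun y ⟨hy, hyx⟩ ↦ ?_⟩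
  have hyS : y - v ∈ S := by
    simpa [← sub_sub] using add_mem ((Submodule.Quotient.eq S).1 hyx) hw
  exact sub_eq_zero.1 (AddSubgroup.disjoint_def.1 h.disjoint (sub_mem hy hv) hyS)

section LaurentDivision

open scoped nonZeroDivisors

variable {K : Type*} [CommRing K]

theorem toLaurent_mem_nonZeroDivisors {p : K[X]} (hp : p ∈ K[X]⁰) :
    toLaurent p ∈ (LaurentPolynomial K)⁰ :=
  IsLocalization.map_nonZeroDivisors_le (Submonoid.powers (X : K[X])) (LaurentPolynomial K)
    ⟨p, hp, rfl⟩

/-- The polynomials of degree less than `d`, as an additive subgroup of the Laurent polynomials. -/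
def laurentDegreeLT (K : Type*) [CommRing K] (d : ℕ) : AddSubgroup (LaurentPolynomial K) :=
  (degreeLT K d).toAddSubgroup.map (toLaurent : K[X] →+* LaurentPolynomial K).toAddMonoidHom

theorem mem_laurentDegreeLT {d : ℕ} {a : LaurentPolynomial K} :
    a ∈ laurentDegreeLT K d ↔ ∃ q : K[X], q.degree < d ∧ toLaurent q = a := by
  simp [laurentDegreeLT, mem_degreeLT]

theorem disjoint_laurentDegreeLT_span {p : K[X]} (hp : p.Monic) (hX : IsCoprime p X) :
    Disjoint (laurentDegreeLT K p.natDegree) (Ideal.span {toLaurent p}).toAddSubgroup := by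
  nontriviality K
  refine AddSubgroup.disjoint_def.2 fun {a} ha hspan ↦ ?_
  obtain ⟨r, hr, rfl⟩ := mem_laurentDegreeLT.1 ha
  obtain ⟨q, hq⟩ := Ideal.mem_span_singleton.1 hspan
  obtain ⟨n, f, hf⟩ := LaurentPolynomial.exists_T_pow q
  have hmul : r * X ^ n = p * f := toLaurent_injective <| by
    rw [map_mul, map_mul, toLaurent_X_pow, hf, hq, mul_assoc]
  have hdvd : p ∣ r := (hX.pow_right (n := n)).dvd_of_dvd_mul_right ⟨f, hmul⟩
  have hr0 : r = 0 := (hp.not_dvd_of_degree_lt · (degree_eq_natDegree hp.ne_zero ▸ hr)).mtr hdvd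
  rw [hr0, map_zero]

theorem codisjoint_laurentDegreeLT_span {p : K[X]} (hp : p.Monic) (hX : IsCoprime p X) :
    Codisjoint (laurentDegreeLT K p.natDegree) (Ideal.span {toLaurent p}).toAddSubgroup := by
  nontriviality K
  refine codisjoint_iff.2 (eq_top_iff.2 fun a _ ↦ AddSubgroup.mem_sup.2 ?_)
  obtain ⟨n, f, hf⟩ := LaurentPolynomial.exists_T_pow a
  obtain ⟨u, v, huv⟩ := hX.pow_right (n := n)
  -- `v` inverts `X ^ n` modulo `p`, so `a = f / X ^ n` is congruent to the polynomial `v * f`.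
  refine ⟨toLaurent (v * f %ₘ p), mem_laurentDegreeLT.2 ⟨_, ?_, rfl⟩,
    toLaurent p * (toLaurent (v * f /ₘ p) + toLaurent u * a),
    Ideal.mul_mem_right _ _ (Ideal.mem_span_singleton_self _), ?_⟩
  · rw [← degree_eq_natDegree hp.ne_zero]
    exact degree_modByMonic_lt _ hp
  · have hdiv := congrArg toLaurent (modByMonic_add_div (v * f) p)
    have hinv := congrArg toLaurent huv
    simp only [map_add, map_mul, map_one, toLaurent_X_pow, hf] at hdiv hinv
    linear_combination hdiv + a * hinv

theorem isCompl_laurentDegreeLT_span {p : K[X]} (hp : p.Monic) (hX : IsCoprime p X) :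
    IsCompl (laurentDegreeLT K p.natDegree) (Ideal.span {toLaurent p}).toAddSubgroup :=
  ⟨disjoint_laurentDegreeLT_span hp hX, codisjoint_laurentDegreeLT_span hp hX⟩

theorem T_add_T_neg (m : ℕ) :
    (T m + T (-m) : LaurentPolynomial K) = T (-m) * toLaurent (X ^ (2 * m) + 1) := by
  rw [map_add, map_one, toLaurent_X_pow, mul_add, mul_one, ← LaurentPolynomial.T_add]
  congr 2
  push_cast
  ring

theorem T_add_T_neg_mem_nonZeroDivisors {m : ℕ} (hm : m ≠ 0) :
    (T m + T (-m) : LaurentPolynomial K) ∈ (LaurentPolynomial K)⁰ := by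
  have hmonic : (X ^ (2 * m) + 1 : K[X]).Monic := monic_X_pow_add_C 1 (by omega)
  rw [T_add_T_neg]
  exact mul_mem (LaurentPolynomial.isUnit_T _).mem_nonZeroDivisors
    (toLaurent_mem_nonZeroDivisors hmonic.mem_nonZeroDivisors)

theorem isCompl_laurentDegreeLT_span_T_add_T_neg [Nontrivial K] {m : ℕ} (hm : m ≠ 0) :
    IsCompl (laurentDegreeLT K (2 * m)) (Ideal.span {T m + T (-m)}).toAddSubgroup := by
  have hmonic : (X ^ (2 * m) + 1 : K[X]).Monic := monic_X_pow_add_C 1 (by omega)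
  have hcoprime : IsCoprime (X ^ (2 * m) + 1 : K[X]) X :=
    ⟨1, -X ^ (2 * m - 1), by rw [neg_mul, ← pow_succ, Nat.sub_add_cancel (by omega)]; ring⟩
  rw [T_add_T_neg, Ideal.span_singleton_mul_left_unit (LaurentPolynomial.isUnit_T _)]
  convert isCompl_laurentDegreeLT_span hmonic hcoprime
  exact (natDegree_X_pow_add_C (r := (1 : K))).symm

end LaurentDivision

section Chebyshev

variable {A : Type*} [CommRing A]

theorem eq_chebyshev_S {Q : ℤ → A[X]} (hneg_two : Q (-2) = -1) (hneg_one : Q (-1) = 0)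
    (hrec : ∀ n : ℤ, 0 ≤ n → Q n = X * Q (n - 1) - Q (n - 2)) {n : ℤ} (hn : -2 ≤ n) :
    Q n = Chebyshev.S A n := by
  suffices Q n = Chebyshev.S A n ∧ Q (n + 1) = Chebyshev.S A (n + 1) from this.1
  induction n, hn using Int.leInduction with
  | base => simp [hneg_two, hneg_one]
  | succ n hn ih =>
    refine ⟨ih.2, ?_⟩
    rw [hrec _ (by omega), Chebyshev.S_eq, add_sub_cancel_right, ih.2,
      show n + 1 + 1 - 2 = n by ring, ih.1]

theorem isMonicOfDegree_chebyshev_S [Nontrivial A] (n : ℕ) :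
    IsMonicOfDegree (Chebyshev.S A n) n := by
  induction n using Nat.twoStepInduction with
  | zero => simp
  | one => simpa using isMonicOfDegree_X A
  | more n ih ih' =>
    push_cast
    rw [Chebyshev.S_add_two, show n + 2 = 1 + (n + 1) by ring]
    refine ((isMonicOfDegree_X A).mul (mod_cast ih')).sub ?_
    rw [ih.natDegree_eq]
    omega

end Chebyshev

section NormalForms

/-- The basis `1, t, Q_2 - ε_2, Q_3 - ε_3, …` of the normal forms, where `ε_k` is `1` for even `k`
and `t` for odd `k`. The first two terms are not of the form `Q_k - ε_k`, which vanishes for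
`k < 2`. -/
def normalFormBasis (A : Type*) [CommRing A] (k : ℕ) : A[X] :=
  if k < 2 then X ^ k else Chebyshev.S A k - if Even k then 1 else X

/-- The coefficients of `normalFormBasis` allowed in a normal form: all Laurent polynomials for
`k < 2`, and the polynomials of degree at most `2 * k + 1` for `k ≥ 2`. -/
def normalFormCoeffs (K : Type*) [CommRing K] (k : ℕ) : AddSubgroup (LaurentPolynomial K) :=
  if k < 2 then ⊤ else laurentDegreeLT K (2 * (k + 1))

theorem isMonicOfDegree_normalFormBasis {A : Type*} [CommRing A] [Nontrivial A] (k : ℕ) :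
    IsMonicOfDegree (normalFormBasis A k) k := by
  rw [normalFormBasis]
  split_ifs with hk heven
  · exact isMonicOfDegree_X_pow A k
  · exact (isMonicOfDegree_chebyshev_S k).sub (by rw [natDegree_one]; omega)
  · exact (isMonicOfDegree_chebyshev_S k).sub (by rw [natDegree_X]; omega)

theorem forall_mem_normalFormCoeffs_iff {K : Type*} [CommRing K] {p : ℕ → LaurentPolynomial K} :
    (∀ k, p k ∈ normalFormCoeffs K k) ↔
      ∀ k, 2 ≤ k → ∃ q : K[X], q.degree ≤ (2 * k + 1 : ℕ) ∧ p k = toLaurent q := by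
  refine forall_congr' fun k ↦ ?_
  rcases lt_or_ge k 2 with hk | hk
  · simp [normalFormCoeffs, hk, hk.not_ge]
  · simp only [normalFormCoeffs, hk.not_gt, hk, if_false, forall_const, mem_laurentDegreeLT,
      eq_comm (a := p k)]
    simp only [← mem_degreeLT, ← mem_degreeLE, ← degreeLT_succ_eq_degreeLE, mul_add, mul_one]

theorem sum_range_C_mul_normalFormBasis {A : Type*} [CommRing A] {N : ℕ} (hN : 1 ≤ N)
    (p : ℕ → A) :
    ∑ k ∈ Finset.range (N + 1), C (p k) * normalFormBasis A k =
      C (p 0) + C (p 1) * X + ∑ k ∈ Finset.Icc 2 N,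
        C (p k) * (Chebyshev.S A k - if Even k then 1 else X) := by
  rw [Finset.range_eq_Ico, Finset.sum_eq_sum_Ico_succ_bot (by omega),
    Finset.sum_eq_sum_Ico_succ_bot (by omega), ← add_assoc]
  congr 1
  · simp [normalFormBasis]
  · refine Finset.sum_congr (by ext; simp) fun k hk ↦ ?_
    rw [normalFormBasis, if_neg (Finset.mem_Icc.1 hk).1.not_gt]

theorem mem_restrictedSpan_normalFormBasis_iff {K : Type*} [CommRing K]
    {f : (LaurentPolynomial K)[X]} :
    f ∈ restrictedSpan (normalFormCoeffs K) (normalFormBasis (LaurentPolynomial K)) ↔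
      ∃ N : ℕ, 1 ≤ N ∧ ∃ p : ℕ → LaurentPolynomial K,
        (∀ k : ℕ, 2 ≤ k → ∃ q : K[X], q.degree ≤ (2 * k + 1 : ℕ) ∧ p k = toLaurent q) ∧
        f = C (p 0) + C (p 1) * X + ∑ k ∈ Finset.Icc 2 N,
          C (p k) * (Chebyshev.S (LaurentPolynomial K) k - if Even k then 1 else X) := by
  rw [mem_restrictedSpan_iff_exists_sum_range 1]
  refine exists_congr fun N ↦ and_congr_right fun hN ↦ exists_congr fun p ↦ ?_
  rw [forall_mem_normalFormCoeffs_iff, sum_range_C_mul_normalFormBasis hN]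

theorem isCompl_normalForms_span {K : Type*} [CommRing K] [Nontrivial K]
    {g : ℕ → (LaurentPolynomial K)[X]}
    (hg : ∀ n : ℕ, 2 ≤ n → (g n - C (T (n + 1) + T (-n - 1) : LaurentPolynomial K) *
      normalFormBasis (LaurentPolynomial K) n).degree < n) :
    IsCompl (restrictedSpan (normalFormCoeffs K) (normalFormBasis (LaurentPolynomial K)))
      (Submodule.span (LaurentPolynomial K) (g '' Set.Ici 2)).toAddSubgroup := by
  have hcast (n : ℕ) : (T (n + 1) + T (-n - 1) : LaurentPolynomial K) =
      T (n + 1 : ℕ) + T (-(n + 1 : ℕ)) := by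
    rw [Nat.cast_succ, neg_add']
  have hlead (n : ℕ) (hn : 2 ≤ n) :
      (g n).degree ≤ n ∧ (g n).coeff n = T (n + 1 : ℕ) + T (-(n + 1 : ℕ)) :=
    degree_le_and_coeff_eq_of_degree_sub_smul_lt (isMonicOfDegree_normalFormBasis n)
      (by simpa only [hcast, smul_eq_C_mul] using hg n hn)
  refine isCompl_restrictedSpan_span isMonicOfDegree_normalFormBasis (fun n hn ↦ (hlead n hn).1)
    (fun n hn ↦ ?_) (fun n hn ↦ ?_) fun n hn ↦ ?_
  · rw [(hlead n hn).2]
    exact T_add_T_neg_mem_nonZeroDivisors n.succ_ne_zero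
  · rw [(hlead n hn).2, normalFormCoeffs, if_neg (Set.mem_Ici.1 hn).not_gt]
    exact isCompl_laurentDegreeLT_span_T_add_T_neg n.succ_ne_zero
  · rw [normalFormCoeffs, if_pos (by simpa using hn)]

end NormalForms

theorem stmt_5_general {K : Type*} [CommRing K] [Nontrivial K]
    (Q : ℤ → (LaurentPolynomial K)[X]) (hneg_two : Q (-2) = -1) (hneg_one : Q (-1) = 0)
    (hrec : ∀ n : ℤ, 0 ≤ n → Q n = X * Q (n - 1) - Q (n - 2))
    (g : ℤ → (LaurentPolynomial K)[X])
    (hgeven : ∀ n : ℤ, 2 ≤ n → Even n → g n =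
      C (T (n + 1) + T (-n - 1)) * (Q n - 1) -
        C (2 * (T 1 + T (-1)) * ∑ k ∈ Finset.Icc (1 : ℤ) (n / 2), T (n + 2 - 4 * k)))
    (hgodd : ∀ n : ℤ, 2 ≤ n → ¬ Even n → g n =
      C (T (n + 1) + T (-n - 1)) * (Q n - X) -
        C (2 * ∑ k ∈ Finset.Icc (1 : ℤ) ((n - 1) / 2), T (n + 1 - 4 * k)) * X)
    (S : Submodule (LaurentPolynomial K) (LaurentPolynomial K)[X])
    (hS : S = Submodule.span (LaurentPolynomial K) (g '' {n : ℤ | 2 ≤ n})) :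
    ∀ x : (LaurentPolynomial K)[X] ⧸ S, ∃! y : (LaurentPolynomial K)[X],
      (∃ N : ℕ, 1 ≤ N ∧ ∃ p : ℕ → LaurentPolynomial K,
        (∀ k : ℕ, 2 ≤ k → ∃ q : K[X], q.degree ≤ (2 * k + 1 : ℕ) ∧ p k = q.toLaurent) ∧
        y = C (p 0) + C (p 1) * X +
          ∑ k ∈ Finset.Icc 2 N, C (p k) * (Q (k : ℤ) - if Even k then 1 else X)) ∧
      Submodule.Quotient.mk y = x := by
  have hQ (n : ℕ) : Q n = Chebyshev.S (LaurentPolynomial K) n :=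
    eq_chebyshev_S hneg_two hneg_one hrec (by omega)
  have hg (n : ℕ) (hn : 2 ≤ n) : (g n - C (T (n + 1) + T (-n - 1) : LaurentPolynomial K) *
      normalFormBasis (LaurentPolynomial K) n).degree < n := by
    have hn' : (1 : WithBot ℕ) < n := mod_cast hn
    rw [normalFormBasis, if_neg hn.not_gt, ← hQ]
    by_cases heven : Even n
    · rw [hgeven n (mod_cast hn) (mod_cast heven), if_pos heven, sub_sub_cancel_left, degree_neg]
      exact degree_C_le.trans_lt (zero_lt_one.trans hn')
    · rw [hgodd n (mod_cast hn) (mod_cast heven), if_neg heven, sub_sub_cancel_left, degree_neg]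
      exact (degree_C_mul_X_le _).trans_lt hn'
  have himage : g '' {n : ℤ | 2 ≤ n} = (fun n : ℕ ↦ g n) '' Set.Ici 2 := by
    rw [← Set.image_image g (fun n : ℕ ↦ (n : ℤ)), Nat.image_cast_int_Ici]
    rfl
  have hcompl : IsCompl (restrictedSpan (normalFormCoeffs K) (normalFormBasis _))
      S.toAddSubgroup := by
    rw [hS, himage]
    exact isCompl_normalForms_span hg
  simp only [hQ, ← mem_restrictedSpan_normalFormBasis_iff]
  exact existsUnique_mem_mk_eq_of_isCompl hcompl

theorem stmt_5 (Q : ℤ → R[X]) (hQ : IsQ Q)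
    (g : ℤ → R[X])
    (hgeven : ∀ n : ℤ, 2 ≤ n → Even n → g n =
      C (T (n + 1) + T (-n - 1)) * (Q n - 1) -
        C (2 * (T 1 + T (-1)) * ∑ k ∈ Finset.Icc (1 : ℤ) (n / 2), T (n + 2 - 4 * k)))
    (hgodd : ∀ n : ℤ, 2 ≤ n → ¬ Even n → g n =
      C (T (n + 1) + T (-n - 1)) * (Q n - X) -
        C (2 * ∑ k ∈ Finset.Icc (1 : ℤ) ((n - 1) / 2), T (n + 1 - 4 * k)) * X)
    (S : Submodule R R[X]) (hS : S = Submodule.span R (g '' {n : ℤ | 2 ≤ n})) :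
    ∀ x : R[X] ⧸ S, ∃! y : R[X],
      (∃ N : ℕ, 1 ≤ N ∧ ∃ p : ℕ → R,
        (∀ k : ℕ, 2 ≤ k → ∃ q : Polynomial ℤ, q.degree ≤ (2 * k + 1 : ℕ) ∧ p k = q.toLaurent) ∧
        y = C (p 0) + C (p 1) * X +
          ∑ k ∈ Finset.Icc 2 N, C (p k) * (Q (k : ℤ) - if Even k then 1 else X)) ∧
      Submodule.Quotient.mk y = x :=
  stmt_5_general Q hQ.1 hQ.2.1 hQ.2.2 g hgeven hgodd S hS
end
end

section
/- Let n ≥ 2 be an even integer, let r_n = ∑_{j=0}^{n} (−1)^j A^{n−2j} ∈ R, and let m = A^n·( r_n·(Q_n − 1) − 2·∑_{k=1}^{n/2} A^{n+2−4k} ) ∈ R[t]. Then the image of m in the quotient R-module R[t]/S is nonzero, but (A + A⁻¹) times this image is zero; in particular R[t]/S has a nonzero torsion element. -/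
open Polynomial
open LaurentPolynomial (T)

noncomputable section

/-!
The polynomials `Qₙ` are the rescaled Chebyshev polynomials of the second kind: `Qₙ` has the
parity of `n` and leading term `tⁿ`. For even `n`, `(A + A⁻¹) * rₙ = Aⁿ⁺¹ + A⁻ⁿ⁻¹`, so
`(A + A⁻¹) • m = Aⁿ • gₙ ∈ S`. The same identity shows that, for every element of `S`, the
coefficients in positive even degrees are divisible by `A + A⁻¹`: this holds for the `gₖ` with `k`
even, and the `gₖ` with `k` odd are odd polynomials. But the coefficient of `tⁿ` in `m` is `Aⁿ rₙ`,
which takes the value `n + 1 ≠ 0` at a square root `A` of `-1`.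
-/

open scoped LaurentPolynomial

section ChebyshevS

open Polynomial.Chebyshev (S S_zero S_one S_eq S_add_two S_sub_one)

theorem IsQ.eq_chebyshevS {Q : ℤ → R[X]} (hQ : IsQ Q) {j : ℤ} (hj : -2 ≤ j) : Q j = S R j := by
  obtain ⟨hQ_neg_two, hQ_neg_one, hQ_rec⟩ := hQ
  obtain ⟨n, rfl⟩ : ∃ n : ℕ, j = n - 2 := ⟨(j + 2).toNat, by lia⟩
  induction n using Nat.twoStepInduction with
  | zero => simpa using hQ_neg_two
  | one => simpa using hQ_neg_one
  | more n ih₀ ih₁ =>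
    rw [hQ_rec _ (by lia), S_eq, show ((n + 2 : ℕ) : ℤ) - 2 - 1 = (n + 1 : ℕ) - 2 by lia,
      show ((n + 2 : ℕ) : ℤ) - 2 - 2 = n - 2 by lia, ih₀ (by lia), ih₁ (by lia)]

variable {K : Type*} [CommRing K]

theorem coeff_chebyshevS_eq_zero_of_odd {n : ℤ} {j : ℕ} (h : Odd (n + j)) :
    (S K n).coeff j = 0 := by
  induction n using Polynomial.Chebyshev.induct generalizing j with
  | zero =>
    rw [S_zero, coeff_one, if_neg (by grind)]
  | one =>
    rw [S_one, coeff_X, if_neg (by grind)]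
  | add_two n ih₁ ih₀ =>
    rw [S_add_two, coeff_sub, ih₀ (by grind), sub_zero]
    cases j with
    | zero => exact coeff_X_mul_zero _
    | succ j => rw [coeff_X_mul, ih₁ (by grind)]
  | neg_add_one n ih₀ ih₁ =>
    rw [S_sub_one, coeff_sub, ih₁ (by grind), sub_zero]
    cases j with
    | zero => exact coeff_X_mul_zero _
    | succ j => rw [coeff_X_mul, ih₀ (by grind)]

theorem natDegree_chebyshevS_le (n : ℕ) : (S K n).natDegree ≤ n := by
  induction n using Nat.twoStepInduction with
  | zero => simp
  | one => simpa using natDegree_X_le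
  | more n ih₀ ih₁ =>
    rw [Nat.cast_add, Nat.cast_two, S_add_two]
    refine natDegree_sub_le_of_le (natDegree_mul_le_of_le natDegree_X_le ih₁) ih₀ |>.trans ?_
    lia

theorem coeff_chebyshevS_self (n : ℕ) : (S K n).coeff n = 1 := by
  induction n using Nat.twoStepInduction with
  | zero => simp
  | one => simp
  | more n _ ih₁ =>
    have h_top : (S K n).coeff (n + 2) = 0 :=
      coeff_eq_zero_of_natDegree_lt (by have := natDegree_chebyshevS_le (K := K) n; lia)
    rw [Nat.cast_add, Nat.cast_two, S_add_two, coeff_sub, coeff_X_mul, h_top, sub_zero]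
    exact_mod_cast ih₁

end ChebyshevS

section AltGeomSum

variable {K L : Type*} [CommRing K] [CommRing L]

variable (K) in
/-- The alternating sum `rₙ = Aⁿ - Aⁿ⁻² + ⋯ + (-1)ⁿ A⁻ⁿ`, the quotient of
`Aⁿ⁺¹ + (-1)ⁿ A⁻ⁿ⁻¹` by `A + A⁻¹`. -/
def altGeomSum (n : ℕ) : K[T;T⁻¹] :=
  ∑ j ∈ Finset.range (n + 1), (-1) ^ j * T ((n : ℤ) - 2 * j)

theorem T_one_add_T_neg_one_mul_altGeomSum (n : ℕ) :
    (T 1 + T (-1)) * altGeomSum K n = T (n + 1) + (-1) ^ n * T (-n - 1) := by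
  let f : ℕ → K[T;T⁻¹] := fun j ↦ (-1) ^ j * T (n + 1 - 2 * j)
  have telescope (j : ℕ) :
      (T 1 + T (-1)) * ((-1) ^ j * T ((n : ℤ) - 2 * j)) = f j - f (j + 1) := by
    have h₁ : (T (n + 1 - 2 * j) : K[T;T⁻¹]) = T 1 * T (n - 2 * j) := by
      rw [← LaurentPolynomial.T_add]; congr 1; ring
    have h₂ : (T (n + 1 - 2 * (j + 1 : ℕ)) : K[T;T⁻¹]) = T (-1) * T (n - 2 * j) := by
      rw [← LaurentPolynomial.T_add]; congr 1; push_cast; ring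
    simp only [f, h₁, h₂]
    ring
  have h_last : (n : ℤ) + 1 - 2 * (n + 1 : ℕ) = -n - 1 := by lia
  rw [altGeomSum, Finset.mul_sum, Finset.sum_congr rfl fun j _ ↦ telescope j,
    Finset.sum_range_sub']
  simp only [f, h_last, pow_succ, pow_zero, Nat.cast_zero, mul_zero, sub_zero]
  ring

theorem T_one_add_T_neg_one_mul_altGeomSum_of_even {n : ℕ} (hn : Even n) :
    (T 1 + T (-1)) * altGeomSum K n = T (n + 1) + T (-n - 1) := by
  rw [T_one_add_T_neg_one_mul_altGeomSum, hn.neg_one_pow, one_mul]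

theorem T_one_add_T_neg_one_dvd_of_even {j : ℤ} (hj₀ : 0 ≤ j) (hj : Even j) :
    (T 1 + T (-1) : K[T;T⁻¹]) ∣ T (j + 1) + T (-j - 1) := by
  lift j to ℕ using hj₀
  exact ⟨_, (T_one_add_T_neg_one_mul_altGeomSum_of_even (mod_cast hj)).symm⟩

theorem eval₂_altGeomSum (f : K →+* L) {i : Lˣ} (hi : i ^ 2 = -1) (n : ℕ) :
    LaurentPolynomial.eval₂ f i (altGeomSum K n) = (n + 1) * (i : L) ^ n := by
  have h_term (j : ℕ) : (-1 : L) ^ j * (i ^ ((n : ℤ) - 2 * j) : Lˣ) = (i : L) ^ n := by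
    have h_zpow : (-1) ^ j * i ^ ((n : ℤ) - 2 * j) = i ^ n := by
      rw [← hi, ← pow_mul, ← zpow_natCast, ← zpow_add, ← zpow_natCast]
      congr 1
      push_cast
      ring
    simpa using congrArg Units.val h_zpow
  simp [altGeomSum, LaurentPolynomial.eval₂_T, h_term]

theorem eval₂_T_one_add_T_neg_one (f : K →+* L) {i : Lˣ} (hi : i ^ 2 = -1) :
    LaurentPolynomial.eval₂ f i (T 1 + T (-1)) = 0 := by
  have h_inv : i⁻¹ = -i := inv_eq_of_mul_eq_one_right (by rw [mul_neg, ← sq, hi, neg_neg])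
  simp [LaurentPolynomial.eval₂_T, h_inv]

theorem not_T_one_add_T_neg_one_dvd_altGeomSum {n : ℕ} (hn : (n + 1 : K) ≠ 0) :
    ¬ (T 1 + T (-1)) ∣ altGeomSum K n := by
  intro h_dvd
  let f := algebraMap K (QuadraticAlgebra K (-1) 0)
  have h_omega : QuadraticAlgebra.omega * QuadraticAlgebra.omega = f (-1) := by
    simp [f, QuadraticAlgebra.omega_mul_omega_eq_add]
  let i : (QuadraticAlgebra K (-1) 0)ˣ :=
    ⟨.omega, -.omega, by simp [h_omega], by simp [h_omega]⟩
  have hi : i ^ 2 = -1 := Units.ext (by simp [i, sq, h_omega])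
  have h_eval : (n + 1) * (i : QuadraticAlgebra K (-1) 0) ^ n = 0 := by
    simpa only [eval₂_T_one_add_T_neg_one f hi, eval₂_altGeomSum f hi, zero_dvd_iff] using
      _root_.map_dvd (LaurentPolynomial.eval₂ f i) h_dvd
  have h_map : f (n + 1) = 0 := by
    simpa using (i.isUnit.pow n).mul_left_eq_zero.mp h_eval
  exact hn ((map_eq_zero_iff f QuadraticAlgebra.algebraMap_injective).mp h_map)

end AltGeomSum

theorem dvd_coeff_of_mem_span {A : Type*} [CommSemiring A] {s : Set A[X]} {a : A} {n : ℕ}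
    (h : ∀ p ∈ s, a ∣ p.coeff n) {p : A[X]} (hp : p ∈ Submodule.span A s) : a ∣ p.coeff n := by
  have h_le : Submodule.span A s ≤ Submodule.comap (lcoeff A n) (Ideal.span {a}) :=
    Submodule.span_le.mpr fun q hq ↦ Ideal.mem_span_singleton.mpr (h q hq)
  exact Ideal.mem_span_singleton.mp (h_le hp)

theorem sum_Icc_natCast_int {M : Type*} [AddCommMonoid M] (f : ℤ → M) (a b : ℕ) :
    ∑ k ∈ Finset.Icc (a : ℤ) b, f k = ∑ k ∈ Finset.Icc a b, f k := by
  have h_image : Finset.Icc (a : ℤ) b = (Finset.Icc a b).image Nat.cast :=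
    Finset.coe_injective (by simpa using (Nat.image_cast_int_Icc a b).symm)
  rw [h_image, Finset.sum_image Nat.cast_injective.injOn]

section Torsion

open Polynomial.Chebyshev (S)

variable {K : Type*} [CommRing K]

theorem stmt_6_general (c d : ℤ → K[T;T⁻¹]) (g : ℤ → K[T;T⁻¹][X])
    (hgeven : ∀ j : ℤ, 2 ≤ j → Even j →
      g j = C (T (j + 1) + T (-j - 1)) * (S K[T;T⁻¹] j - 1) - C ((T 1 + T (-1)) * c j))
    (hgodd : ∀ j : ℤ, 2 ≤ j → ¬ Even j →
      g j = C (T (j + 1) + T (-j - 1)) * (S K[T;T⁻¹] j - X) - C (d j) * X)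
    {n : ℕ} (hn : 2 ≤ n) (hne : Even n) (hn_ne : (n + 1 : K) ≠ 0)
    {N : Submodule K[T;T⁻¹] K[T;T⁻¹][X]} (hN : N = Submodule.span _ (g '' {j : ℤ | 2 ≤ j}))
    {m : K[T;T⁻¹][X]} (hm : m = C (T n) * (C (altGeomSum K n) * (S K[T;T⁻¹] n - 1) - C (c n))) :
    (Submodule.Quotient.mk m : K[T;T⁻¹][X] ⧸ N) ≠ 0 ∧
      (T 1 + T (-1) : K[T;T⁻¹]) • (Submodule.Quotient.mk m : K[T;T⁻¹][X] ⧸ N) = 0 := by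
  subst hN
  constructor
  · have h_dvd : ∀ p ∈ g '' {j : ℤ | 2 ≤ j}, T 1 + T (-1) ∣ p.coeff n := by
      rintro _ ⟨j, hj, rfl⟩
      rcases em (Even j) with hje | hjo
      · rw [hgeven j hj hje, coeff_sub, coeff_C_mul, coeff_C_of_ne_zero (by lia), sub_zero]
        exact (T_one_add_T_neg_one_dvd_of_even (by grind) hje).mul_right _
      · have h_odd : (S K[T;T⁻¹] j).coeff n = 0 := coeff_chebyshevS_eq_zero_of_odd (by grind)
        have h_X : (X : K[T;T⁻¹][X]).coeff n = 0 := coeff_X_of_ne_one (by lia)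
        simp only [hgodd j hj hjo, coeff_sub, coeff_C_mul, h_odd, h_X, sub_zero, mul_zero, dvd_zero]
    have h_coeff : m.coeff n = T n * altGeomSum K n := by
      simp [hm, coeff_chebyshevS_self, coeff_one, coeff_C_of_ne_zero, show n ≠ 0 by lia]
    rw [Ne, Submodule.Quotient.mk_eq_zero]
    intro h_mem
    have h_dvd_m := dvd_coeff_of_mem_span h_dvd h_mem
    rw [h_coeff, (LaurentPolynomial.isUnit_T n).dvd_mul_left] at h_dvd_m
    exact not_T_one_add_T_neg_one_dvd_altGeomSum hn_ne h_dvd_m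
  · have h_smul : (T 1 + T (-1) : K[T;T⁻¹]) • m = (T n : K[T;T⁻¹]) • g n := by
      rw [hgeven n (mod_cast hn) (mod_cast hne), hm,
        ← T_one_add_T_neg_one_mul_altGeomSum_of_even hne, smul_eq_C_mul, smul_eq_C_mul]
      simp only [C_mul]
      ring
    rw [← Submodule.Quotient.mk_smul, Submodule.Quotient.mk_eq_zero, h_smul]
    exact Submodule.smul_mem _ _ <|
      Submodule.subset_span (Set.mem_image_of_mem g (by simpa using hn))

end Torsion

theorem stmt_6 (Q : ℤ → R[X]) (hQ : IsQ Q)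
    (g : ℤ → R[X])
    (hgeven : ∀ n : ℤ, 2 ≤ n → Even n → g n =
      C (T (n + 1) + T (-n - 1)) * (Q n - 1) -
        C (2 * (T 1 + T (-1)) * ∑ k ∈ Finset.Icc (1 : ℤ) (n / 2), T (n + 2 - 4 * k)))
    (hgodd : ∀ n : ℤ, 2 ≤ n → ¬ Even n → g n =
      C (T (n + 1) + T (-n - 1)) * (Q n - X) -
        C (2 * ∑ k ∈ Finset.Icc (1 : ℤ) ((n - 1) / 2), T (n + 1 - 4 * k)) * X)
    (S : Submodule R R[X]) (hS : S = Submodule.span R (g '' {n : ℤ | 2 ≤ n}))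
    (n : ℕ) (hn : 2 ≤ n) (hne : Even n)
    (rn : R) (hrn : rn = ∑ j ∈ Finset.range (n + 1), (-1 : R) ^ j * T ((n : ℤ) - 2 * j))
    (m : R[X])
    (hm : m = C (T (n : ℤ)) * (C rn * (Q (n : ℤ) - 1) -
      C (2 * ∑ k ∈ Finset.Icc 1 (n / 2), T ((n : ℤ) + 2 - 4 * (k : ℤ))))) :
    (Submodule.Quotient.mk m : R[X] ⧸ S) ≠ 0 ∧
      (T 1 + T (-1) : R) • (Submodule.Quotient.mk m : R[X] ⧸ S) = 0 := by
  have h_sum : ∑ k ∈ Finset.Icc (1 : ℤ) (n / 2), (T (n + 2 - 4 * k) : R) =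
      ∑ k ∈ Finset.Icc 1 (n / 2), T (n + 2 - 4 * (k : ℤ)) :=
    mod_cast sum_Icc_natCast_int (fun k ↦ (T (n + 2 - 4 * k) : R)) 1 (n / 2)
  exact stmt_6_general (fun j ↦ 2 * ∑ k ∈ Finset.Icc (1 : ℤ) (j / 2), T (j + 2 - 4 * k))
    (fun j ↦ 2 * ∑ k ∈ Finset.Icc (1 : ℤ) ((j - 1) / 2), T (j + 1 - 4 * k)) g
    (fun j hj he ↦ by rw [hgeven j hj he, hQ.eq_chebyshevS (by lia), mul_left_comm, mul_assoc])
    (fun j hj ho ↦ by rw [hgodd j hj ho, hQ.eq_chebyshevS (by lia)])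
    hn hne (mod_cast n.succ_ne_zero) hS
    (by rw [hm, hrn, hQ.eq_chebyshevS (by lia), h_sum, altGeomSum])
end
end

section
/- Let n ≥ 5 be an integer with n ≡ 1 (mod 4), let r_n = ∑_{j=0}^{(n−1)/2} (−1)^j A^{n−1−4j} ∈ R, and let m = A^{n−1}·( r_n·(Q_n − t) − 2t·∑_{k=1}^{(n−1)/4} A^{n+3−8k} ) ∈ R[t]. Then the image of m in the quotient R-module R[t]/S is nonzero, but (A² + A⁻²) times this image is zero; in particular R[t]/S has a nonzero torsion element. -/
open Polynomial
open LaurentPolynomial (T)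

noncomputable section

/-!
Specialising `A` to `1` and reducing the coefficients modulo `2` annihilates every generator of `S`,
since the two powers of `A` in the leading factor cancel and the remaining sum carries a factor `2`.
As `r_n` has an odd number of terms, the same map sends `m` to `Q_n - t`, which is nonzero because
`Q_n` is monic of degree `n > 1`. On the other hand, multiplication by `A² + A⁻²` telescopes
the alternating sum `r_n` to `A^{n+1} + A^{-n-1}` and splits each term of the other sum into two
consecutive terms of the sum in `g_n`, so that `(A² + A⁻²) m = A^{n-1} g_n`.
-/

open scoped LaurentPolynomial

section Chebyshev

theorem IsQ.eq_chebyshev_S {Q : ℤ → R[X]} (hQ : IsQ Q) {n : ℤ} (hn : -2 ≤ n) :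
    Q n = Chebyshev.S R n := by
  obtain ⟨hQ_neg_two, hQ_neg_one, hQ_rec⟩ := hQ
  have consecutive (j : ℕ) :
      Q (j - 2) = Chebyshev.S R (j - 2) ∧ Q (j - 1) = Chebyshev.S R (j - 1) := by
    induction j with
    | zero => simp [hQ_neg_two, hQ_neg_one]
    | succ j ih =>
      rw [Nat.cast_succ, add_sub_cancel_right, show (j : ℤ) + 1 - 2 = j - 1 by ring,
        hQ_rec j j.cast_nonneg, Chebyshev.S_eq R j, ih.1, ih.2]
      exact ⟨rfl, rfl⟩
  obtain ⟨j, hj⟩ := Int.eq_ofNat_of_zero_le (show 0 ≤ n + 2 by omega)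
  obtain rfl : n = j - 2 := by omega
  exact (consecutive j).1

theorem natDegree_chebyshev_S_int (n : ℕ) : (Chebyshev.S ℤ n).natDegree = n := by
  simpa [← Chebyshev.S_comp_two_mul_X, natDegree_comp] using Chebyshev.natDegree_U_natCast ℤ n

theorem monic_chebyshev_S (F : Type*) [CommRing F] (n : ℕ) : (Chebyshev.S F n).Monic := by
  suffices hmonic : (Chebyshev.S ℤ n).Monic by
    simpa only [Chebyshev.map_S] using hmonic.map (Int.castRingHom F)
  have hlead := Chebyshev.leadingCoeff_U_natCast ℤ n
  have hdeg : (2 * X : ℤ[X]).natDegree = 1 := natDegree_C_mul_X 2 two_ne_zero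
  have hlead_two : (2 * X : ℤ[X]).leadingCoeff = 2 := leadingCoeff_C_mul_X 2
  rw [← Chebyshev.S_comp_two_mul_X, leadingCoeff_comp (by simp [hdeg]), hlead_two,
    natDegree_chebyshev_S_int] at hlead
  exact mul_right_cancel₀ (pow_ne_zero n two_ne_zero) (hlead.trans (one_mul _).symm)

theorem natDegree_chebyshev_S (F : Type*) [CommRing F] [Nontrivial F] (n : ℕ) :
    (Chebyshev.S F n).natDegree = n := by
  rw [← Chebyshev.map_S (Int.castRingHom F), (monic_chebyshev_S ℤ n).natDegree_map,
    natDegree_chebyshev_S_int]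

theorem chebyshev_S_ne_X (F : Type*) [CommRing F] [Nontrivial F] {n : ℕ} (hn : n ≠ 1) :
    Chebyshev.S F n ≠ X := by
  intro h
  rw [← natDegree_chebyshev_S F n, h, natDegree_X] at hn
  exact hn rfl

end Chebyshev

section LaurentSums

variable {k : Type*} [CommRing k]

theorem T_add_T_neg_mul_alternating_sum (a d : ℤ) (N : ℕ) :
    (T d + T (-d) : k[T;T⁻¹]) * ∑ j ∈ Finset.range N, (-1) ^ j * T (a - 2 * d * j) =
      T (a + d) - (-1) ^ N * T (a + d - 2 * d * N) := by
  induction N with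
  | zero => simp
  | succ N ih =>
    have hleft : (T (a + d - 2 * d * N) : k[T;T⁻¹]) = T d * T (a - 2 * d * N) := by
      rw [← LaurentPolynomial.T_add]; congr 1; ring
    have hright : (T (a + d - 2 * d * (N + 1 : ℕ)) : k[T;T⁻¹]) = T (-d) * T (a - 2 * d * N) := by
      rw [← LaurentPolynomial.T_add]; congr 1; push_cast; ring
    rw [Finset.sum_range_succ, mul_add, ih, hleft, hright]
    ring

theorem sum_Icc_one_two_mul {M : Type*} [AddCommMonoid M] (f : ℤ → M) (p : ℕ) :
    ∑ i ∈ Finset.Icc (1 : ℤ) (2 * p), f i =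
      ∑ i ∈ Finset.Icc 1 p, (f (2 * i - 1) + f (2 * i)) := by
  induction p with
  | zero => simp
  | succ p ih =>
    have hIcc : Finset.Icc (1 : ℤ) (2 * (p + 1 : ℕ)) =
        insert (2 * (p : ℤ) + 2) (insert (2 * (p : ℤ) + 1) (Finset.Icc (1 : ℤ) (2 * p))) := by
      ext x
      simp only [Finset.mem_Icc, Finset.mem_insert]
      omega
    rw [hIcc, Finset.sum_insert (by simp), Finset.sum_insert (by simp), ih,
      Finset.sum_Icc_succ_top (by omega), Nat.cast_succ, mul_add, mul_one,
      show 2 * (p : ℤ) + 2 - 1 = 2 * p + 1 by ring]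
    abel

theorem T_add_T_neg_mul_sum_Icc (b d : ℤ) (p : ℕ) :
    (T d + T (-d) : k[T;T⁻¹]) * ∑ i ∈ Finset.Icc 1 p, T (b + d - 4 * d * (i : ℤ)) =
      ∑ i ∈ Finset.Icc (1 : ℤ) (2 * p), T (b - 2 * d * i) := by
  rw [sum_Icc_one_two_mul, Finset.mul_sum]
  refine Finset.sum_congr rfl fun i _ => ?_
  rw [add_mul, ← LaurentPolynomial.T_add, ← LaurentPolynomial.T_add]
  congr 2 <;> ring

theorem T_two_add_T_neg_two_mul_alternating_sum {n : ℕ} (hn : n % 4 = 1) :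
    (T 2 + T (-2) : k[T;T⁻¹]) *
        ∑ j ∈ Finset.range ((n - 1) / 2 + 1), (-1) ^ j * T ((n : ℤ) - 1 - 4 * j) =
      T (n + 1) + T (-n - 1) := by
  have hodd : Odd ((n - 1) / 2 + 1) := by rw [Nat.odd_iff]; omega
  have htop : (n : ℤ) - 1 + 2 = n + 1 := by ring
  have hbot : (n : ℤ) + 1 - 2 * 2 * ((n - 1) / 2 + 1 : ℕ) = -n - 1 := by omega
  have hsum := T_add_T_neg_mul_alternating_sum (k := k) (n - 1) 2 ((n - 1) / 2 + 1)
  rw [htop, hbot, hodd.neg_one_pow, neg_one_mul, sub_neg_eq_add] at hsum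
  exact hsum

theorem T_two_add_T_neg_two_mul_sum_Icc {n : ℕ} (hn : n % 4 = 1) :
    (T 2 + T (-2) : k[T;T⁻¹]) * ∑ i ∈ Finset.Icc 1 ((n - 1) / 4), T ((n : ℤ) + 3 - 8 * (i : ℤ)) =
      ∑ i ∈ Finset.Icc (1 : ℤ) ((n - 1) / 2), T (n + 1 - 4 * i) := by
  have hlength : 2 * ((n - 1) / 4 : ℕ) = ((n : ℤ) - 1) / 2 := by omega
  have hshift : (n : ℤ) + 1 + 2 = n + 3 := by ring
  have hsum := T_add_T_neg_mul_sum_Icc (k := k) (n + 1) 2 ((n - 1) / 4)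
  rw [hlength, hshift] at hsum
  exact hsum

end LaurentSums

theorem map_eq_zero_of_mem_span {A B : Type*} [CommSemiring A] [Semiring B] (φ : A →+* B)
    {G : Set A[X]} (hG : ∀ x ∈ G, x.map φ = 0) {x : A[X]} (hx : x ∈ Submodule.span A G) :
    x.map φ = 0 := by
  have hle : Submodule.span A G ≤ (RingHom.ker (mapRingHom φ)).restrictScalars A :=
    Submodule.span_le.2 hG
  exact hle hx

section EvalOne

variable {k F : Type*} [CommRing k] [CommRing F] (f : k →+* F)

/-- The specialisation `A ↦ 1` of Laurent polynomials in `A`, acting as `f` on coefficients. With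
`F` of characteristic two it detects the nonzero class in the quotient by `S`. -/
def evalOne : k[T;T⁻¹] →+* F := LaurentPolynomial.eval₂ f 1

@[simp]
theorem evalOne_T (n : ℤ) : evalOne f (T n) = 1 := by
  simp [evalOne]

variable [CharP F 2]

theorem evalOne_alternating_sum (a : ℕ → ℤ) (N : ℕ) :
    evalOne f (∑ j ∈ Finset.range N, (-1) ^ j * T (a j)) = N := by
  simp [CharTwo.neg_eq]

theorem evalOne_T_add_T (a b : ℤ) : evalOne f (T a + T b) = 0 := by
  rw [map_add, evalOne_T, evalOne_T, CharTwo.add_self_eq_zero]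

theorem map_evalOne_C_mul_sub_C_two_mul (r s : k[T;T⁻¹]) (p q : k[T;T⁻¹][X]) :
    (C r * p - C (2 * s) * q).map (evalOne f) = C (evalOne f r) * p.map (evalOne f) := by
  have htwo : evalOne f (2 * s) = 0 := by
    rw [map_mul, map_ofNat, CharTwo.two_eq_zero, zero_mul]
  rw [Polynomial.map_sub, Polynomial.map_mul, Polynomial.map_mul, map_C, map_C, htwo, C_0,
    zero_mul, sub_zero]

theorem notMem_span_of_evalOne_eq_one {G : Set k[T;T⁻¹][X]} (hG : ∀ x ∈ G, x.map (evalOne f) = 0)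
    {r : k[T;T⁻¹]} (hr : evalOne f r = 1) (a : ℤ) (s : k[T;T⁻¹]) (q : k[T;T⁻¹][X]) {n : ℕ}
    (hn : n ≠ 1) :
    C (T a) * (C r * (Chebyshev.S k[T;T⁻¹] n - X) - C (2 * s) * q) ∉
      Submodule.span k[T;T⁻¹] G := by
  intro hmem
  have : Nontrivial F := CharP.nontrivial_of_char_ne_one (Nat.succ_ne_self 1)
  have hmap := map_eq_zero_of_mem_span _ hG hmem
  rw [Polynomial.map_mul, map_evalOne_C_mul_sub_C_two_mul, hr, map_C, evalOne_T, C_1, one_mul,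
    one_mul, Polynomial.map_sub, Chebyshev.map_S, map_X] at hmap
  exact chebyshev_S_ne_X F hn (sub_eq_zero.1 hmap)

end EvalOne

theorem stmt_7_general {k : Type*} [CommRing k] (h2 : ¬ IsUnit (2 : k)) (Q : ℤ → k[T;T⁻¹][X])
    (hQ : ∀ n : ℤ, -2 ≤ n → Q n = Chebyshev.S k[T;T⁻¹] n)
    (g : ℤ → k[T;T⁻¹][X])
    (hgeven : ∀ n : ℤ, 2 ≤ n → Even n → g n =
      C (T (n + 1) + T (-n - 1)) * (Q n - 1) -
        C (2 * (T 1 + T (-1)) * ∑ i ∈ Finset.Icc (1 : ℤ) (n / 2), T (n + 2 - 4 * i)))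
    (hgodd : ∀ n : ℤ, 2 ≤ n → ¬ Even n → g n =
      C (T (n + 1) + T (-n - 1)) * (Q n - X) -
        C (2 * ∑ i ∈ Finset.Icc (1 : ℤ) ((n - 1) / 2), T (n + 1 - 4 * i)) * X)
    (S : Submodule k[T;T⁻¹] k[T;T⁻¹][X])
    (hS : S = Submodule.span k[T;T⁻¹] (g '' {n : ℤ | 2 ≤ n}))
    (n : ℕ) (hn : 5 ≤ n) (hn4 : n % 4 = 1)
    (rn : k[T;T⁻¹])
    (hrn : rn = ∑ j ∈ Finset.range ((n - 1) / 2 + 1), (-1) ^ j * T ((n : ℤ) - 1 - 4 * j))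
    (m : k[T;T⁻¹][X])
    (hm : m = C (T ((n : ℤ) - 1)) * (C rn * (Q (n : ℤ) - X) -
      C (2 * ∑ i ∈ Finset.Icc 1 ((n - 1) / 4), T ((n : ℤ) + 3 - 8 * (i : ℤ))) * X)) :
    (Submodule.Quotient.mk m : k[T;T⁻¹][X] ⧸ S) ≠ 0 ∧
      (T 2 + T (-2) : k[T;T⁻¹]) • (Submodule.Quotient.mk m : k[T;T⁻¹][X] ⧸ S) = 0 := by
  constructor
  · have : CharP (k ⧸ Ideal.span {(2 : k)}) 2 := CharP.quotient k 2 h2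
    let f := Ideal.Quotient.mk (Ideal.span {(2 : k)})
    have hg_map : ∀ x ∈ g '' {n : ℤ | 2 ≤ n}, x.map (evalOne f) = 0 := by
      rintro _ ⟨i, hi, rfl⟩
      by_cases hi_even : Even i
      · rw [hgeven i hi hi_even, mul_assoc, ← mul_one (C (2 * _)),
          map_evalOne_C_mul_sub_C_two_mul, evalOne_T_add_T, C_0, zero_mul]
      · rw [hgodd i hi hi_even, map_evalOne_C_mul_sub_C_two_mul, evalOne_T_add_T, C_0, zero_mul]
    have hr : evalOne f rn = 1 := by
      have hodd : ¬ Even ((n - 1) / 2 + 1) := by rw [Nat.not_even_iff]; omega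
      rw [hrn, evalOne_alternating_sum, CharTwo.natCast_eq_ite, if_neg hodd]
    rw [Ne, Submodule.Quotient.mk_eq_zero, hS, hm, hQ n (by omega)]
    exact notMem_span_of_evalOne_eq_one f hg_map hr _ _ _ (by omega)
  · have hmg : (T 2 + T (-2) : k[T;T⁻¹]) • m = (T ((n : ℤ) - 1) : k[T;T⁻¹]) • g n := by
      rw [hm, hrn, hgodd n (by omega) (by rw [Int.not_even_iff]; omega),
        ← T_two_add_T_neg_two_mul_alternating_sum hn4, ← T_two_add_T_neg_two_mul_sum_Icc hn4]
      simp only [smul_eq_C_mul, C_mul]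
      ring
    rw [← Submodule.Quotient.mk_smul, hmg, Submodule.Quotient.mk_eq_zero, hS]
    exact Submodule.smul_mem _ _ (Submodule.subset_span ⟨n, Set.mem_ofPred.2 (by omega), rfl⟩)

theorem stmt_7 (Q : ℤ → R[X]) (hQ : IsQ Q)
    (g : ℤ → R[X])
    (hgeven : ∀ n : ℤ, 2 ≤ n → Even n → g n =
      C (T (n + 1) + T (-n - 1)) * (Q n - 1) -
        C (2 * (T 1 + T (-1)) * ∑ k ∈ Finset.Icc (1 : ℤ) (n / 2), T (n + 2 - 4 * k)))
    (hgodd : ∀ n : ℤ, 2 ≤ n → ¬ Even n → g n =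
      C (T (n + 1) + T (-n - 1)) * (Q n - X) -
        C (2 * ∑ k ∈ Finset.Icc (1 : ℤ) ((n - 1) / 2), T (n + 1 - 4 * k)) * X)
    (S : Submodule R R[X]) (hS : S = Submodule.span R (g '' {n : ℤ | 2 ≤ n}))
    (n : ℕ) (hn : 5 ≤ n) (hn4 : n % 4 = 1)
    (rn : R)
    (hrn : rn = ∑ j ∈ Finset.range ((n - 1) / 2 + 1), (-1 : R) ^ j * T ((n : ℤ) - 1 - 4 * j))
    (m : R[X])
    (hm : m = C (T ((n : ℤ) - 1)) * (C rn * (Q (n : ℤ) - X) -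
      C (2 * ∑ k ∈ Finset.Icc 1 ((n - 1) / 4), T ((n : ℤ) + 3 - 8 * (k : ℤ))) * X)) :
    (Submodule.Quotient.mk m : R[X] ⧸ S) ≠ 0 ∧
      (T 2 + T (-2) : R) • (Submodule.Quotient.mk m : R[X] ⧸ S) = 0 :=
  stmt_7_general (by simp [Int.isUnit_iff]) Q (fun _ => hQ.eq_chebyshev_S) g hgeven hgodd S hS
    n hn hn4 rn hrn m hm
end
end

section
/- Let p_3 ∈ ℤ[A] ⊂ R be nonzero with degree at most 7 in A, let p_1 ∈ R, and set m = p_3·(Q_3 − t) + p_1·t ∈ R[t]. Then the image of m in the quotient R-module R[t]/S is not a torsion element: for every nonzero r ∈ R, r times the image of m is nonzero in R[t]/S. -/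
/-!
The relation `g n` has degree exactly `n` for every `n ≥ 2`, so a nonzero polynomial of degree less
than two never lies in the span of the relations. Eliminating `Q 3` between `m` and `g 3` gives
`(A⁴ + A⁻⁴) m - p₃ g₃ = (2 p₃ + (A⁴ + A⁻⁴) p₁) t`, so a nonzero multiple of `m` in `S` would force
`2 p₃ + (A⁴ + A⁻⁴) p₁ = 0`. Then `A⁸ + 1` would divide the polynomial `2 p₃`, which is nonzero of
degree at most seven.
-/

open Polynomial
open LaurentPolynomial (T)

noncomputable section

lemma degree_eq_of_X_mul_sub_recurrence {A : Type*} [Ring A] {p : ℕ → A[X]}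
    (h_zero : (p 0).degree = 0) (h_one : (p 1).degree = 1)
    (h_rec : ∀ n, p (n + 2) = X * p (n + 1) - p n) (n : ℕ) : (p n).degree = n := by
  have : Nontrivial A := Nontrivial.of_polynomial_ne (p := p 0) (q := 0) <| by
    intro h
    simp [h] at h_zero
  induction n using Nat.twoStepInduction with
  | zero => simpa using h_zero
  | one => simpa using h_one
  | more n ih ih' =>
    have h_lead : (X * p (n + 1)).degree = ((n + 2 : ℕ) : WithBot ℕ) := by
      rw [X_mul, degree_mul_X, ih']
      norm_cast
    have h_lt : (p n).degree < (X * p (n + 1)).degree := by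
      rw [ih, h_lead]
      exact_mod_cast (by omega : n < n + 2)
    rw [h_rec, degree_sub_eq_left_of_degree_lt h_lt, h_lead]

lemma IsQ.degree_eq {Q : ℤ → R[X]} (hQ : IsQ Q) (n : ℕ) : (Q n).degree = n := by
  obtain ⟨h_neg_two, h_neg_one, h_rec⟩ := hQ
  have h_zero : Q 0 = 1 := by simp [h_rec 0 le_rfl, h_neg_two, h_neg_one]
  have h_one : Q 1 = X := by simp [h_rec 1 zero_le_one, h_zero, h_neg_one]
  refine degree_eq_of_X_mul_sub_recurrence (p := fun n : ℕ => Q n) (by simp [h_zero])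
    (by simp [h_one]) (fun n => ?_) n
  convert h_rec (n + 2 : ℕ) (by positivity) using 4 <;> push_cast <;> ring

lemma degree_C_mul_sub_sub {A : Type*} [Ring A] [NoZeroDivisors A] {a : A} (ha : a ≠ 0)
    {p q s : A[X]} (hq : q.degree < p.degree) (hs : s.degree < p.degree) :
    (C a * (p - q) - s).degree = p.degree := by
  have h_lead : (C a * (p - q)).degree = p.degree := by
    rw [degree_C_mul ha, degree_sub_eq_left_of_degree_lt hq]
  rw [degree_sub_eq_left_of_degree_lt (h_lead ▸ hs), h_lead]

section SpanOfHighDegree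

variable {A : Type*} [CommRing A] [IsDomain A] {g : ℕ → A[X]} {N : ℕ}

lemma eq_zero_of_mem_span_of_degree_lt (hg : ∀ n, N ≤ n → (g n).degree = n) {p : A[X]}
    (hp : p ∈ Submodule.span A (g '' Set.Ici N)) (hdeg : p.degree < N) : p = 0 := by
  let s : Polynomial.Sequence A :=
    ⟨fun n => if N ≤ n then g n else X ^ n, fun n => by split_ifs with h <;> simp [hg, h]⟩
  have hs_high : s '' Set.Ici N = g '' Set.Ici N :=
    Set.image_congr fun n hn => if_pos hn
  have hs_low : Submodule.span A (s '' Set.Iio N) = degreeLT A N :=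
    s.span_degreeLT fun n hn => by simp [s, hn.not_ge]
  have h_disjoint := s.linearIndependent.disjoint_span_image (Set.Iio_disjoint_Ici (le_refl N))
  rw [hs_high, hs_low] at h_disjoint
  exact Submodule.disjoint_def.mp h_disjoint p (mem_degreeLT.mpr hdeg) hp

lemma smul_mk_ne_zero_of_degree_lt (hg : ∀ n, N ≤ n → (g n).degree = n) {a : A} {m p : A[X]}
    (h_mem : a • m - p ∈ Submodule.span A (g '' Set.Ici N)) (hp : p ≠ 0) (hdeg : p.degree < N)
    {r : A} (hr : r ≠ 0) :
    r • (Submodule.Quotient.mk m : A[X] ⧸ Submodule.span A (g '' Set.Ici N)) ≠ 0 := by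
  intro h
  rw [← Submodule.Quotient.mk_smul, Submodule.Quotient.mk_eq_zero] at h
  have h_smul_mem : r • p ∈ Submodule.span A (g '' Set.Ici N) := by
    have h_eq : r • p = a • r • m - r • (a • m - p) := by
      rw [smul_sub, smul_comm a r m, sub_sub_cancel]
    exact h_eq ▸ sub_mem (Submodule.smul_mem _ a h) (Submodule.smul_mem _ r h_mem)
  exact smul_ne_zero hr hp <|
    eq_zero_of_mem_span_of_degree_lt hg h_smul_mem ((degree_smul_le r p).trans_lt hdeg)

end SpanOfHighDegree

section Laurent

open scoped LaurentPolynomial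

variable {k : Type*}

lemma T_add_T_ne_zero [Semiring k] [Nontrivial k] {m n : ℤ} (h : m ≠ n) :
    (T m + T n : k[T;T⁻¹]) ≠ 0 := by
  intro h_sum
  have h_coeff := congrArg (fun f : k[T;T⁻¹] => f.coeff m) h_sum
  simp [LaurentPolynomial.T_apply, h.symm] at h_coeff

lemma dvd_of_toLaurent_dvd_toLaurent [CommSemiring k] {p q : k[X]} (hp : IsCoprime p X)
    (h : toLaurent p ∣ toLaurent q) : p ∣ q := by
  obtain ⟨f, hf⟩ := h
  obtain ⟨n, f', hf'⟩ := f.exists_T_pow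
  have h_eq : q * X ^ n = p * f' := toLaurent_injective <| by
    rw [map_mul, map_mul, hf, hf', toLaurent_X_pow, mul_assoc]
  exact hp.pow_right.dvd_of_dvd_mul_right ⟨f', h_eq⟩

lemma toLaurent_add_T_add_T_mul_ne_zero [CommRing k] {p : k[X]} {n : ℕ} (hp : p ≠ 0)
    (hdeg : p.degree < (2 * n : ℕ)) (q : k[T;T⁻¹]) :
    toLaurent p + (T n + T (-n)) * q ≠ 0 := by
  have := Nontrivial.of_polynomial_ne hp
  intro h
  have hn : 2 * n ≠ 0 := by
    intro h_zero
    rw [h_zero, Nat.cast_zero, ← not_le, zero_le_degree_iff] at hdeg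
    exact hdeg hp
  have h_factor : (T n + T (-n) : k[T;T⁻¹]) = toLaurent (X ^ (2 * n) + 1) * T (-n) := by
    rw [map_add, map_one, toLaurent_X_pow, add_mul, one_mul, ← LaurentPolynomial.T_add]
    congr 2
    push_cast
    ring
  have h_coprime : IsCoprime (X ^ (2 * n) + 1 : k[X]) X :=
    ⟨1, -X ^ (2 * n - 1), by rw [neg_mul, pow_sub_one_mul hn]; ring⟩
  have h_dvd : X ^ (2 * n) + 1 ∣ p := dvd_of_toLaurent_dvd_toLaurent h_coprime
    ⟨-(T (-n) * q), by rw [eq_neg_of_add_eq_zero_left h, h_factor]; ring⟩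
  have h_monic : (X ^ (2 * n) + 1 : k[X]).Monic := monic_X_pow_add_C 1 hn
  refine h_monic.not_dvd_of_degree_lt hp ?_ h_dvd
  rwa [← C_1, degree_X_pow_add_C (Nat.pos_of_ne_zero hn)]

lemma two_mul_toLaurent_add_T_add_T_mul_ne_zero [CommRing k] [NoZeroDivisors k] [NeZero (2 : k)]
    {p : k[X]} {n : ℕ} (hp : p ≠ 0) (hdeg : p.degree < (2 * n : ℕ)) (q : k[T;T⁻¹]) :
    2 * toLaurent p + (T n + T (-n)) * q ≠ 0 := by
  have h_two : (2 : k) ≠ 0 := two_ne_zero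
  have h_ne := toLaurent_add_T_add_T_mul_ne_zero (p := C 2 * p) (n := n)
    (mul_ne_zero (C_ne_zero.mpr h_two) hp) (by rwa [degree_C_mul h_two]) q
  rwa [map_mul, C_ofNat, map_ofNat] at h_ne

theorem stmt_8_general [CommRing k] [IsDomain k] (Q : ℤ → k[T;T⁻¹][X])
    (hQ : ∀ n : ℕ, 2 ≤ n → (Q n).degree = n) (g : ℤ → k[T;T⁻¹][X])
    (hgeven : ∀ n : ℤ, 2 ≤ n → Even n → g n =
      C (T (n + 1) + T (-n - 1)) * (Q n - 1) -
        C (2 * (T 1 + T (-1)) * ∑ j ∈ Finset.Icc (1 : ℤ) (n / 2), T (n + 2 - 4 * j)))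
    (hgodd : ∀ n : ℤ, 2 ≤ n → ¬ Even n → g n =
      C (T (n + 1) + T (-n - 1)) * (Q n - X) -
        C (2 * ∑ j ∈ Finset.Icc (1 : ℤ) ((n - 1) / 2), T (n + 1 - 4 * j)) * X)
    (p3 p1 : k[T;T⁻¹]) (h_ne : 2 * p3 + (T 4 + T (-4)) * p1 ≠ 0) :
    ∀ r : k[T;T⁻¹], r ≠ 0 →
      r • (Submodule.Quotient.mk (C p3 * (Q 3 - X) + C p1 * X) :
        k[T;T⁻¹][X] ⧸ Submodule.span k[T;T⁻¹] (g '' {n : ℤ | 2 ≤ n})) ≠ 0 := by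
  have hg_degree (n : ℕ) (hn : 2 ≤ n) : (g n).degree = n := by
    have hn' : (2 : ℤ) ≤ n := by exact_mod_cast hn
    have hT : (T ((n : ℤ) + 1) + T (-n - 1) : k[T;T⁻¹]) ≠ 0 := T_add_T_ne_zero (by omega)
    have h_one_lt : (1 : WithBot ℕ) < (Q n).degree := by
      rw [hQ n hn]
      exact_mod_cast hn
    rw [← hQ n hn]
    by_cases h_even : Even (n : ℤ)
    · rw [hgeven n hn' h_even]
      exact degree_C_mul_sub_sub hT (degree_one_le.trans_lt (zero_lt_one.trans h_one_lt))
        (degree_C_le.trans_lt (zero_lt_one.trans h_one_lt))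
    · rw [hgodd n hn' h_even]
      exact degree_C_mul_sub_sub hT (degree_X_le.trans_lt h_one_lt)
        ((degree_C_mul_X_le _).trans_lt h_one_lt)
  have h_image : g '' {n : ℤ | 2 ≤ n} = (fun n : ℕ => g n) '' Set.Ici 2 := by
    have h_cast : {n : ℤ | 2 ≤ n} = Nat.cast '' Set.Ici 2 := (Nat.image_cast_int_Ici 2).symm
    rw [h_cast, Set.image_image]
  have h_elim : (T 4 + T (-4) : k[T;T⁻¹]) • (C p3 * (Q 3 - X) + C p1 * X) -
      C (2 * p3 + (T 4 + T (-4)) * p1) * X = p3 • g 3 := by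
    have hg_three : g 3 = C (T 4 + T (-4)) * (Q 3 - X) - C 2 * X := by
      simpa using hgodd 3 (by norm_num) (by decide)
    simp only [hg_three, smul_eq_C_mul, C_add, C_mul]
    ring
  intro r hr
  rw [h_image]
  refine smul_mk_ne_zero_of_degree_lt hg_degree (a := T 4 + T (-4)) ?_
    (mul_ne_zero (C_ne_zero.mpr h_ne) X_ne_zero) ((degree_C_mul_X_le _).trans_lt (by norm_num)) hr
  rw [h_elim]
  exact Submodule.smul_mem _ p3 (Submodule.subset_span ⟨3, by simp, rfl⟩)

end Laurent

theorem stmt_8 (Q : ℤ → R[X]) (hQ : IsQ Q)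
    (g : ℤ → R[X])
    (hgeven : ∀ n : ℤ, 2 ≤ n → Even n → g n =
      C (T (n + 1) + T (-n - 1)) * (Q n - 1) -
        C (2 * (T 1 + T (-1)) * ∑ k ∈ Finset.Icc (1 : ℤ) (n / 2), T (n + 2 - 4 * k)))
    (hgodd : ∀ n : ℤ, 2 ≤ n → ¬ Even n → g n =
      C (T (n + 1) + T (-n - 1)) * (Q n - X) -
        C (2 * ∑ k ∈ Finset.Icc (1 : ℤ) ((n - 1) / 2), T (n + 1 - 4 * k)) * X)
    (S : Submodule R R[X]) (hS : S = Submodule.span R (g '' {n : ℤ | 2 ≤ n}))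
    (p3 : Polynomial ℤ) (hp3 : p3 ≠ 0) (hdeg : p3.degree ≤ 7) (p1 : R)
    (m : R[X]) (hm : m = C (p3.toLaurent) * (Q 3 - X) + C p1 * X) :
    ∀ r : R, r ≠ 0 → r • (Submodule.Quotient.mk m : R[X] ⧸ S) ≠ 0 := by
  subst hS hm
  exact stmt_8_general Q (fun n _ => hQ.degree_eq n) g hgeven hgodd _ p1
    (two_mul_toLaurent_add_T_add_T_mul_ne_zero (n := 4) hp3 (hdeg.trans_lt (by norm_num)) p1)
end
end

section
/- For every integer n ≥ 1, the identity P_n − P_{−n} = (−A^{n+2}+A^{−n−2})·Q_n − (−A^{n−2}+A^{−n+2})·Q_{n−2} holds in R[t]. -/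
open Polynomial
open LaurentPolynomial (T)

noncomputable section

/-!
Dividing `P n` by `A ^ n` turns its recurrence into that of the rescaled Chebyshev polynomials of
the second kind `S n`, which continue `Q` to all integers. Comparing initial values gives
`P n = A ^ n (A⁻² S (n - 2) - A² S n)` for every integer `n`, and the reflection
`S (-n) = -S (n - 2)` expresses `P (-n)` through the same two polynomials. Only that `A` is a unit
matters, so `A` and `t` may be replaced by a unit `a` and an element `t` of any commutative
ring `K`; the theorem is the case `K = R[X]`, `a = C (T 1)`, `t = X`.
-/

section Recurrence

variable {K M : Type*} [CommRing K] [AddCommGroup M] [Module K M] {t : K}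

variable (t) in
theorem eval_chebyshevS_add_two (n : ℤ) :
    (Chebyshev.S K (n + 2)).eval t =
      t * (Chebyshev.S K (n + 1)).eval t - (Chebyshev.S K n).eval t := by
  rw [Chebyshev.S_add_two, eval_sub, eval_mul, eval_X]

theorem eq_eval_chebyshevS_smul_sub_of_recurrence {f : ℤ → M}
    (hf : ∀ n, f (n + 2) = t • f (n + 1) - f n) (n : ℤ) :
    f n = (Chebyshev.S K (n - 1)).eval t • f 1 - (Chebyshev.S K (n - 2)).eval t • f 0 := by
  have hS := eval_chebyshevS_add_two t
  induction n using Chebyshev.induct with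
  | zero => simp
  | one => simp
  | add_two n ih₁ ih₀ =>
    rw [hf, ih₁, ih₀, add_sub_right_comm _ 2, add_sub_right_comm _ 2, hS, hS,
      add_sub_right_comm _ 1, add_sub_right_comm _ 1]
    module
  | neg_add_one n ih₀ ih₁ =>
    have hf_back : f (-n - 1) = t • f (-n) - f (-n + 1) := by
      have h := hf (-n - 1)
      rw [show (-n - 1 + 2 : ℤ) = -n + 1 by ring, sub_add_cancel] at h
      rw [h, sub_sub_cancel]
    have hS_back (m : ℤ) : (Chebyshev.S K (m - 1)).eval t =
        t * (Chebyshev.S K m).eval t - (Chebyshev.S K (m + 1)).eval t := by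
      rw [Chebyshev.S_sub_one, eval_sub, eval_mul, eval_X]
    rw [hf_back, ih₀, ih₁, sub_right_comm _ _ 2, add_sub_right_comm _ 1, add_sub_right_comm _ 1,
      hS_back (-n - 1), hS_back (-n - 2)]
    module

theorem eq_zpow_smul_of_recurrence {a : Kˣ} {p : ℤ → M}
    (hp : ∀ n, p n = a • t • p (n - 1) - a ^ 2 • p (n - 2)) (n : ℤ) :
    p n = a ^ n • ((Chebyshev.S K (n - 1)).eval t • a⁻¹ • p 1 -
      (Chebyshev.S K (n - 2)).eval t • p 0) := by
  let f (m : ℤ) : M := a ^ (-m) • p m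
  have hf (m : ℤ) : f (m + 2) = t • f (m + 1) - f m := by
    have hpm : p (m + 2) = a • t • p (m + 1) - a ^ 2 • p m := by
      rw [hp, add_sub_cancel_right, show m + 2 - 1 = m + 1 by ring]
    have h₁ : a ^ (-(m + 2)) * a = a ^ (-(m + 1)) := by group
    have h₀ : a ^ (-(m + 2)) * a ^ 2 = a ^ (-m) := by group
    simp only [f, hpm, smul_sub, smul_smul, h₁, h₀, smul_comm t]
  calc
    p n = a ^ n • f n := by rw [smul_smul, zpow_neg, mul_inv_cancel, one_smul]
    _ = a ^ n • ((Chebyshev.S K (n - 1)).eval t • a⁻¹ • p 1 -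
        (Chebyshev.S K (n - 2)).eval t • p 0) := by
      rw [eq_eval_chebyshevS_smul_sub_of_recurrence hf n]
      simp only [f, zpow_neg_one, neg_zero, zpow_zero, one_smul]

theorem eq_zpow_mul_eval_chebyshevS_sub {a : Kˣ} {p : ℤ → K}
    (hp₀ : p 0 = -↑(a ^ 2) - ↑(a ^ (-2 : ℤ))) (hp₁ : p 1 = -↑(a ^ 3) * t)
    (hp : ∀ n, p n = ↑a * t * p (n - 1) - ↑(a ^ 2) * p (n - 2)) (n : ℤ) :
    p n = ↑(a ^ n) * (↑(a ^ (-2 : ℤ)) * (Chebyshev.S K (n - 2)).eval t -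
      ↑(a ^ 2) * (Chebyshev.S K n).eval t) := by
  have hS : (Chebyshev.S K n).eval t =
      t * (Chebyshev.S K (n - 1)).eval t - (Chebyshev.S K (n - 2)).eval t := by
    rw [Chebyshev.S_eq, eval_sub, eval_mul, eval_X]
  have hp₁' : a⁻¹ • p 1 = -↑(a ^ 2) * t := by
    rw [hp₁, neg_mul, neg_mul, smul_neg, pow_succ' a 2, Units.val_mul, mul_assoc, Units.smul_def,
      smul_eq_mul, Units.inv_mul_cancel_left]
  have hp_smul (m : ℤ) : p m = a • t • p (m - 1) - a ^ 2 • p (m - 2) := by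
    simpa only [Units.smul_def, smul_eq_mul, mul_assoc] using hp m
  rw [eq_zpow_smul_of_recurrence hp_smul n, hp₁', hp₀, hS]
  simp only [Units.smul_def, smul_eq_mul]
  ring

theorem eq_eval_chebyshevS_of_recurrence_s12 {q : ℤ → K} (hq₂ : q (-2) = -1) (hq₁ : q (-1) = 0)
    (hq : ∀ n, 0 ≤ n → q n = t * q (n - 1) - q (n - 2)) {n : ℤ} (hn : -2 ≤ n) :
    q n = (Chebyshev.S K n).eval t := by
  suffices q n = (Chebyshev.S K n).eval t ∧ q (n + 1) = (Chebyshev.S K (n + 1)).eval t from this.1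
  induction n, hn using Int.leInduction with
  | base => simp [hq₂, hq₁]
  | succ n hn ih =>
    refine ⟨ih.2, ?_⟩
    rw [add_assoc, one_add_one_eq_two, eval_chebyshevS_add_two, hq _ (by lia),
      add_sub_cancel_right, show n + 2 - 1 = n + 1 by ring, ih.1, ih.2]

theorem stmt_12_general {a : Kˣ} {p : ℤ → K}
    (hp₀ : p 0 = -↑(a ^ 2) - ↑(a ^ (-2 : ℤ))) (hp₁ : p 1 = -↑(a ^ 3) * t)
    (hp : ∀ n, p n = ↑a * t * p (n - 1) - ↑(a ^ 2) * p (n - 2)) (n : ℤ) :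
    p n - p (-n) =
      (-↑(a ^ (n + 2)) + ↑(a ^ (-n - 2))) * (Chebyshev.S K n).eval t -
        (-↑(a ^ (n - 2)) + ↑(a ^ (-n + 2))) * (Chebyshev.S K (n - 2)).eval t := by
  have hp_closed := eq_zpow_mul_eval_chebyshevS_sub hp₀ hp₁ hp
  rw [hp_closed n, hp_closed (-n), Chebyshev.S_neg, Chebyshev.S_neg_sub_two]
  simp only [sub_eq_add_neg, zpow_add, zpow_ofNat, Units.val_mul, eval_neg]
  ring

end Recurrence

theorem exists_units_zpow_eq_C_T (k : Type*) [Semiring k] :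
    ∃ a : (LaurentPolynomial k)[X]ˣ, ∀ n : ℤ, ↑(a ^ n) = C (T n : LaurentPolynomial k) := by
  let φ : Multiplicative ℤ →* (LaurentPolynomial k)[X] :=
    (C : LaurentPolynomial k →+* _).toMonoidHom.comp (AddMonoidAlgebra.of k ℤ)
  refine ⟨φ.toHomUnits (.ofAdd 1), fun n ↦ ?_⟩
  rw [← map_zpow, ← ofAdd_zsmul, smul_eq_mul, mul_one]
  rfl

theorem stmt_12 (P : ℤ → R[X]) (hP : IsP P) (Q : ℤ → R[X]) (hQ : IsQ Q) :
    ∀ n : ℤ, 1 ≤ n →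
      P n - P (-n) =
        C (-T (n + 2) + T (-n - 2)) * Q n - C (-T (n - 2) + T (-n + 2)) * Q (n - 2) := by
  intro n hn
  obtain ⟨hP₀, hP₁, hP⟩ := hP
  obtain ⟨hQ₂, hQ₁, hQ⟩ := hQ
  rw [eq_eval_chebyshevS_of_recurrence_s12 hQ₂ hQ₁ hQ (n := n) (by lia),
    eq_eval_chebyshevS_of_recurrence_s12 hQ₂ hQ₁ hQ (n := n - 2) (by lia)]
  obtain ⟨a, ha⟩ := exists_units_zpow_eq_C_T ℤ
  simp only [C_add, C_sub, C_neg, ← ha, zpow_ofNat, pow_one] at hP₀ hP₁ hP ⊢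
  exact stmt_12_general hP₀ hP₁ hP n
end
end

section
/- Let T be the R-submodule of R[t] generated by the elements P_n − P_{−n} for all integers n ≥ 1. Then the quotient R-module R[t]/T is isomorphic to R ⊕ ⊕_{n=1}^{∞} R/(1 − A^{2n+4}), where R/(1 − A^{2n+4}) denotes the quotient of R by the principal ideal generated by 1 − A^{2n+4}. -/
open Polynomial
open LaurentPolynomial (T)

noncomputable section

/-!
Everything works over a commutative ring `K` with a unit `q` in place of `A`. Let `Sₙ` be the
Chebyshev polynomials with `Sₙ₊₂ = t Sₙ₊₁ - Sₙ`. Solving the recurrence gives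
`Pₙ = qⁿ (q⁻² Sₙ₋₂ - q² Sₙ)`, and the symmetry `S₋ₙ = -Sₙ₋₂` turns this into
`Pₙ - P₋ₙ = cₙ₋₂ Sₙ₋₂ - cₙ₊₂ Sₙ`, where `cₙ = qⁿ - q⁻ⁿ`.

The elements `1` and `gₙ = Sₙ + Sₙ₋₂ + ⋯` (ending in `S₁` or `S₂`), `n ≥ 1`, form a basis of `K[t]`.
Since `cₙ₋₂ + cₙ₊₂ = (q² + q⁻²) cₙ`, summation by parts yields
`Pₙ - P₋ₙ = -cₙ₊₂ gₙ + (q² + q⁻²) cₙ gₙ₋₂ - cₙ₋₂ gₙ₋₄`,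
which is triangular in the elements `cₙ₊₂ gₙ`. These therefore span the same submodule, and `cₙ₊₂`
is a unit multiple of `1 - q ^ (2 * n + 4)`.
-/

namespace SkeinQuotient

section Span

variable {ι K M : Type*} [Ring K] [AddCommGroup M] [Module K M]

theorem span_range_eq_of_sub_units_smul_mem [Preorder ι] [WellFoundedLT ι] {u v : ι → M}
    (a : ι → Kˣ) (h : ∀ i, u i - a i • v i ∈ Submodule.span K (v '' Set.Iio i)) :
    Submodule.span K (Set.range u) = Submodule.span K (Set.range v) := by
  apply le_antisymm <;> rw [Submodule.span_le] <;> rintro _ ⟨i, rfl⟩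
  · have hv : a i • v i ∈ Submodule.span K (Set.range v) :=
      Submodule.smul_of_tower_mem _ _ (Submodule.subset_span ⟨i, rfl⟩)
    exact (Submodule.sub_mem_iff_left _ hv).1
      (Submodule.span_mono (Set.image_subset_range v _) (h i))
  · induction i using WellFoundedLT.induction with
    | ind i ih =>
      have lower : Submodule.span K (v '' Set.Iio i) ≤ Submodule.span K (Set.range u) :=
        Submodule.span_le.2 (Set.image_subset_iff.2 ih)
      have leading : a i • v i ∈ Submodule.span K (Set.range u) := by
        simpa only [sub_sub_cancel] using
          sub_mem (Submodule.subset_span (Set.mem_range_self i)) (lower (h i))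
      exact (Submodule.smul_mem_iff_of_isUnit _ (a i).isUnit).1 leading

end Span

section DiagonalQuotient

variable {ι K M : Type*} [CommRing K] [AddCommGroup M] [Module K M]

theorem mem_span_range_smul_basis_iff (b : Module.Basis ι K M) (v : ι → K) {x : M} :
    x ∈ Submodule.span K (Set.range fun i => v i • b i) ↔ ∀ i, v i ∣ b.repr x i := by
  constructor
  · intro hx i
    induction hx using Submodule.span_induction with
    | mem x hx =>
      obtain ⟨j, rfl⟩ := hx
      by_cases hji : j = i <;> simp [hji]
    | zero => simp
    | add x y _ _ hx hy => simpa using dvd_add hx hy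
    | smul a x _ hx => simpa using hx.mul_left a
  · intro h
    rw [← b.linearCombination_repr x, Finsupp.linearCombination_apply]
    refine Submodule.sum_mem _ fun i _ => ?_
    obtain ⟨d, hd⟩ := h i
    simp only [hd, mul_comm (v i), mul_smul]
    exact Submodule.smul_mem _ _ (Submodule.subset_span ⟨i, rfl⟩)

/-- The quotient of a free module by multiples `v i • b i` of its basis vectors, as the direct sum
of the cyclic modules `K ⧸ (v i)`. -/
def quotientSpanSMulBasisEquiv [DecidableEq ι] (b : Module.Basis ι K M) (v : ι → K) :
    (M ⧸ Submodule.span K (Set.range fun i => v i • b i)) ≃ₗ[K]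
      DirectSum ι fun i => K ⧸ Ideal.span {v i} :=
  let reduce : M →ₗ[K] DirectSum ι fun i => K ⧸ Ideal.span {v i} :=
    DirectSum.lmap (fun i => (Ideal.span {v i}).mkQ) ∘ₗ
      (b.repr.trans (finsuppLEquivDirectSum K K ι)).toLinearMap
  have ker_reduce : Submodule.span K (Set.range fun i => v i • b i) = LinearMap.ker reduce := by
    ext x
    rw [mem_span_range_smul_basis_iff, LinearMap.mem_ker, DFinsupp.ext_iff]
    refine forall_congr' fun i => ?_
    rw [← Ideal.mem_span_singleton]
    exact (Submodule.Quotient.mk_eq_zero _).symm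
  have reduce_surjective : Function.Surjective reduce :=
    ((DirectSum.lmap_surjective _).2 fun i => Submodule.mkQ_surjective _).comp
      (LinearEquiv.surjective _)
  (Submodule.quotEquivOfEq _ _ ker_reduce).trans (reduce.quotKerEquivOfSurjective reduce_surjective)

/-- The variant of `quotientSpanSMulBasisEquiv` in which the basis vector `b none` is left alone and
contributes a free summand. -/
def quotientSpanSMulBasisSomeEquiv [DecidableEq ι] (b : Module.Basis (Option ι) K M) (v : ι → K) :
    (M ⧸ Submodule.span K (Set.range fun i => v i • b (some i))) ≃ₗ[K]
      K × DirectSum ι fun i => K ⧸ Ideal.span {v i} :=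
  let v₀ : Option ι → K := fun i => i.elim 0 v
  have span_eq : Submodule.span K (Set.range fun i => v i • b (some i)) =
      Submodule.span K (Set.range fun i => v₀ i • b i) := by
    rw [Option.range_eq, show v₀ none • b none = 0 from zero_smul K _, Submodule.span_insert_zero]
    rfl
  (Submodule.quotEquivOfEq _ _ span_eq).trans <|
    (quotientSpanSMulBasisEquiv b v₀).trans <|
      (DirectSum.lequivProdDirectSum K).trans <|
        (Submodule.quotEquivOfEqBot (Ideal.span {(0 : K)}) (by simp)).prodCongr
          (LinearEquiv.refl K _)

end DiagonalQuotient

section TriangularBasis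

variable {K : Type*} [CommRing K] {p : ℕ → K[X]}

theorem linearIndependent_of_natDegree_le_of_coeff_mem
    (hdeg : ∀ n, (p n).natDegree ≤ n)
    (hcoeff : ∀ n, (p n).coeff n ∈ nonZeroDivisors K) : LinearIndependent K p := by
  rw [linearIndependent_iff]
  intro l hl
  by_contra hne
  have hsupp : l.support.Nonempty := Finsupp.support_nonempty_iff.2 hne
  set n := l.support.max' hsupp
  have hn : n ∈ l.support := l.support.max'_mem hsupp
  have coeff_sum : (Finsupp.linearCombination K p l).coeff n = l n * (p n).coeff n := by
    rw [Finsupp.linearCombination_apply, Finsupp.sum, finsetSum_coeff]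
    refine (Finset.sum_eq_single_of_mem n hn fun i hi hin => ?_).trans (coeff_smul _ _ _)
    have hlt : i < n := lt_of_le_of_ne (l.support.le_max' i hi) hin
    rw [coeff_smul, coeff_eq_zero_of_natDegree_lt ((hdeg i).trans_lt hlt), smul_zero]
  rw [hl, coeff_zero] at coeff_sum
  exact Finsupp.mem_support_iff.1 hn
    ((mul_right_mem_nonZeroDivisors_eq_zero_iff (hcoeff n)).1 coeff_sum.symm)

theorem span_range_eq_top_of_natDegree_le_of_isUnit_coeff
    (hdeg : ∀ n, (p n).natDegree ≤ n)
    (hcoeff : ∀ n, IsUnit ((p n).coeff n)) : Submodule.span K (Set.range p) = ⊤ := by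
  have span_X_pow : Submodule.span K (Set.range fun n : ℕ => (X ^ n : K[X])) = ⊤ := by
    simpa only [coe_basisMonomials, monomial_one_right_eq_X_pow] using (basisMonomials K).span_eq
  rw [← span_X_pow]
  refine span_range_eq_of_sub_units_smul_mem (fun n => (hcoeff n).unit) fun n => ?_
  have span_X_pow_Iio : Submodule.span K ((fun m : ℕ => (X ^ m : K[X])) '' Set.Iio n) =
      degreeLT K n := by
    classical
    rw [degreeLT_eq_span_X_pow, Finset.coe_image, Finset.coe_range]
  rw [span_X_pow_Iio, mem_degreeLT, degree_lt_iff_coeff_zero]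
  intro m hm
  rw [Units.smul_def, IsUnit.unit_spec, coeff_sub, coeff_smul, coeff_X_pow, smul_eq_mul]
  obtain rfl | hlt := hm.eq_or_lt
  · simp
  · simp [hlt.ne', coeff_eq_zero_of_natDegree_lt ((hdeg n).trans_lt hlt)]

/-- The basis of `K[X]` formed by polynomials `p n` of degree at most `n` whose coefficient of
`X ^ n` is a unit. -/
def basisOfNatDegreeLE (hdeg : ∀ n, (p n).natDegree ≤ n) (hcoeff : ∀ n, IsUnit ((p n).coeff n)) :
    Module.Basis ℕ K K[X] :=
  .mk (linearIndependent_of_natDegree_le_of_coeff_mem hdeg fun n => (hcoeff n).mem_nonZeroDivisors)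
    (span_range_eq_top_of_natDegree_le_of_isUnit_coeff hdeg hcoeff).ge

end TriangularBasis

section Chebyshev

open Polynomial.Chebyshev (S)

variable (K : Type*) [CommRing K]

theorem natDegree_chebyshevS_le (n : ℕ) : (S K n).natDegree ≤ n := by
  induction n using Nat.twoStepInduction with
  | zero => simp
  | one => simpa using natDegree_X_le
  | more n ih₀ ih₁ =>
    have hX : (X * S K (n + 1 : ℕ)).natDegree ≤ n + 2 :=
      (natDegree_mul_le_of_le natDegree_X_le ih₁).trans (by omega)
    push_cast at hX ⊢
    rw [Chebyshev.S_add_two]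
    have hS : (S K n).natDegree ≤ n + 2 := ih₀.trans (by omega)
    exact (natDegree_sub_le_of_le hX hS).trans_eq (max_self _)

theorem coeff_chebyshevS_self (n : ℕ) : (S K n).coeff n = 1 := by
  induction n using Nat.twoStepInduction with
  | zero => simp
  | one => simp
  | more n _ ih₁ =>
    have hlt : (S K n).natDegree < n + 2 := (natDegree_chebyshevS_le K n).trans_lt (by omega)
    push_cast at ih₁ ⊢
    rw [Chebyshev.S_add_two, coeff_sub, coeff_X_mul, ih₁, coeff_eq_zero_of_natDegree_lt hlt,
      sub_zero]

/-- The partial sums of every second Chebyshev polynomial: `chebyshevSum K (n + 3)` is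
`gₙ = Sₙ + Sₙ₋₂ + ⋯`, ending in `S₁` or `S₂`. The index starts at `g₋₃ = 0` and `g₋₂ = -1`, the
values obtained from `g₋₁ = g₀ = 0` by running the recurrence backwards, because `P 1 - P (-1)`
involves `g₋₃`. -/
def chebyshevSum : ℕ → K[X]
  | 0 => 0
  | 1 => -1
  | n + 2 => chebyshevSum n + S K (n - 1)

theorem chebyshevSum_two : chebyshevSum K 2 = 0 := by simp [chebyshevSum]

theorem chebyshevSum_three : chebyshevSum K 3 = 0 := by simp [chebyshevSum]

theorem chebyshevSum_add_four (n : ℕ) :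
    chebyshevSum K (n + 4) = chebyshevSum K (n + 2) + S K (n + 1 : ℕ) := by
  rw [chebyshevSum]
  congr 2
  push_cast
  ring

theorem natDegree_chebyshevSum_le (n : ℕ) : (chebyshevSum K (n + 3)).natDegree ≤ n := by
  induction n using Nat.twoStepInduction with
  | zero => simp [chebyshevSum_three]
  | one => simpa [chebyshevSum_add_four, chebyshevSum_two] using natDegree_X_le
  | more n ih _ =>
    rw [show n + 2 + 3 = n + 1 + 4 from rfl, chebyshevSum_add_four]
    exact natDegree_add_le_of_degree_le (ih.trans (by omega)) (natDegree_chebyshevS_le K (n + 2))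

theorem coeff_chebyshevSum_self (n : ℕ) : (chebyshevSum K (n + 4)).coeff (n + 1) = 1 := by
  have hlower : (chebyshevSum K (n + 2)).coeff (n + 1) = 0 := by
    cases n with
    | zero => simp [chebyshevSum_two]
    | succ n =>
      exact coeff_eq_zero_of_natDegree_lt ((natDegree_chebyshevSum_le K n).trans_lt (by omega))
  rw [chebyshevSum_add_four, coeff_add, hlower, coeff_chebyshevS_self, zero_add]

/-- The family `1, S₁, S₂, S₃ + S₁, S₄ + S₂, …`, which is a basis of `K[X]`. -/
def chebyshevSumFamily : ℕ → K[X]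
  | 0 => 1
  | n + 1 => chebyshevSum K (n + 4)

/-- `chebyshevSumFamily` as a basis, with the constant `1` singled out by the index `none`. -/
def chebyshevSumBasis : Module.Basis (Option ℕ) K K[X] :=
  (basisOfNatDegreeLE (p := chebyshevSumFamily K)
    (by rintro (_ | n); exacts [natDegree_one.le, natDegree_chebyshevSum_le K (n + 1)])
    (by rintro (_ | n) <;> simp [chebyshevSumFamily, coeff_chebyshevSum_self])).reindex
    (Equiv.natEquivNatSumPUnit.{0}.trans (Equiv.optionEquivSumPUnit ℕ).symm)

theorem chebyshevSumBasis_some (n : ℕ) :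
    chebyshevSumBasis K (some n) = chebyshevSum K (n + 4) := by
  rw [chebyshevSumBasis, Module.Basis.reindex_apply]
  exact Module.Basis.mk_apply _ _ (n + 1)

end Chebyshev

theorem eq_of_two_sided_recurrence {B : Type*} [CommRing B] {a b : B} (hb : IsLeftRegular b)
    {u v : ℤ → B} (hu : ∀ n, u (n + 2) = a * u (n + 1) - b * u n)
    (hv : ∀ n, v (n + 2) = a * v (n + 1) - b * v n) (h₀ : u 0 = v 0) (h₁ : u 1 = v 1) :
    u = v := by
  funext n
  induction n using Polynomial.Chebyshev.induct with
  | zero => exact h₀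
  | one => exact h₁
  | add_two n ih₁ ih₀ => rw [hu, hv, ih₁, ih₀]
  | neg_add_one n ih₀ ih₁ =>
    have hu' := hu (-n - 1)
    have hv' := hv (-n - 1)
    rw [show -(n : ℤ) - 1 + 2 = -n + 1 by ring, show -(n : ℤ) - 1 + 1 = -n by ring] at hu' hv'
    apply hb
    linear_combination a * ih₀ - ih₁ + hu' - hv'

section Skein

open Polynomial.Chebyshev (S)

variable {K : Type*} [CommRing K] (q : Kˣ)

/-- The integer power `q ^ n` as an element of the ring, the counterpart of `T n`. -/
def qpow (n : ℤ) : K := ↑(q ^ n)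

theorem qpow_zero : qpow q 0 = 1 := by simp [qpow]

theorem qpow_one : qpow q 1 = q := by simp [qpow]

theorem qpow_add (m n : ℤ) : qpow q (m + n) = qpow q m * qpow q n := by
  rw [qpow, zpow_add, Units.val_mul, qpow, qpow]

theorem isUnit_qpow (n : ℤ) : IsUnit (qpow q n) := (q ^ n).isUnit

/-- The family `P` of the theorem, with the Laurent polynomial ring and its variable `A` replaced by
an arbitrary commutative ring and a unit `q`. -/
def IsSkeinFamily (P : ℤ → K[X]) : Prop :=
  P 0 = C (-qpow q 2 - qpow q (-2)) ∧ P 1 = C (-qpow q 3) * X ∧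
    ∀ n : ℤ, P n = C (qpow q 1) * X * P (n - 1) - C (qpow q 2) * P (n - 2)

variable {q} in
theorem IsSkeinFamily.eq_chebyshevS {P : ℤ → K[X]} (hP : IsSkeinFamily q P) (n : ℤ) :
    P n = C (qpow q n) * (C (qpow q (-2)) * S K (n - 2) - C (qpow q 2) * S K n) := by
  obtain ⟨h₀, h₁, hrec⟩ := hP
  have regular : IsLeftRegular (C (qpow q 2)) := ((isUnit_qpow q 2).map C).isRegular.left
  suffices P = fun n => C (qpow q n) * (C (qpow q (-2)) * S K (n - 2) - C (qpow q 2) * S K n) from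
    congrFun this n
  refine eq_of_two_sided_recurrence (a := C (qpow q 1) * X) regular ?_ ?_ ?_ ?_
  · intro n
    simpa only [show n + 2 - 1 = n + 1 by ring, add_sub_cancel_right] using hrec (n + 2)
  · intro n
    have hS := Chebyshev.S_add_two K n
    have hS' := Chebyshev.S_eq K n
    have hq : qpow q 2 = qpow q 1 * qpow q 1 := qpow_add q 1 1
    rw [add_sub_cancel_right, show n + 1 - 2 = n - 1 by ring, hS]
    simp only [qpow_add, hq, C_mul]
    linear_combination C (qpow q n) * C (qpow q 1) ^ 2 * C (qpow q (-2)) * hS'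
  · rw [h₀]
    simp only [zero_sub, qpow_zero, Chebyshev.S_neg_two, Chebyshev.S_zero, C_sub, C_neg, C_1]
    ring
  · rw [h₁, show (3 : ℤ) = 1 + 2 by norm_num, qpow_add]
    simp only [Int.reduceSub, Chebyshev.S_neg_one, Chebyshev.S_one, C_neg, C_mul]
    ring

/-- The antisymmetric Laurent polynomial `q ^ n - q ^ (-n)`, which is `q - q⁻¹` times the quantum
integer `[n]`. -/
def quantumDiff (n : ℤ) : K := qpow q n - qpow q (-n)

theorem quantumDiff_eq (n : ℤ) :
    quantumDiff q n = -(qpow q (-n) * (1 - qpow q (2 * n))) := by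
  rw [quantumDiff, mul_sub, ← qpow_add]
  ring_nf

theorem quantumDiff_sub_two_add_add_two (n : ℤ) :
    quantumDiff q (n - 2) + quantumDiff q (n + 2) =
      (qpow q 2 + qpow q (-2)) * quantumDiff q n := by
  simp only [quantumDiff, sub_eq_add_neg, neg_add, neg_neg, qpow_add]
  ring

variable {q} in
theorem IsSkeinFamily.sub_neg {P : ℤ → K[X]} (hP : IsSkeinFamily q P) (n : ℤ) :
    P n - P (-n) = quantumDiff q (n - 2) • S K (n - 2) - quantumDiff q (n + 2) • S K n := by
  rw [hP.eq_chebyshevS, hP.eq_chebyshevS, Chebyshev.S_neg, Chebyshev.S_neg_sub_two]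
  simp only [quantumDiff, smul_eq_C_mul, sub_eq_add_neg, neg_add, neg_neg, qpow_add, C_add, C_neg,
    C_mul]
  ring

/-- The elements `cₙ₊₂ gₙ` on which `P n - P (-n)` depends triangularly, where
`cₙ = quantumDiff q n` and `gₙ = chebyshevSum K (n + 3)`, indexed by `k = n + 3`. -/
def scaledSum (k : ℕ) : K[X] := quantumDiff q (k - 1) • chebyshevSum K k

theorem scaledSum_eq_zero {k : ℕ} (hk : k < 4) : scaledSum q k = 0 := by
  rw [scaledSum]
  interval_cases k
  · rw [chebyshevSum, smul_zero]
  · simp [quantumDiff]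
  · rw [chebyshevSum_two, smul_zero]
  · rw [chebyshevSum_three, smul_zero]

/-- The diagonal relations: `cₙ₊₂ gₙ` with `n = k + 1`, cleared of the unit in `cₙ₊₂`. -/
def torsionRelation (k : ℕ) : K[X] :=
  (1 - qpow q (2 * ((k : ℤ) + 1) + 4)) • chebyshevSum K (k + 4)

theorem scaledSum_add_four (k : ℕ) :
    scaledSum q (k + 4) = -(qpow q (-(k + 3)) • torsionRelation q k) := by
  have hk : ((k + 4 : ℕ) : ℤ) - 1 = k + 3 := by push_cast; ring
  rw [scaledSum, torsionRelation, quantumDiff_eq, smul_smul, ← neg_smul, hk,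
    show 2 * ((k : ℤ) + 1) + 4 = 2 * (k + 3) by ring]

variable {q} in
theorem IsSkeinFamily.sub_neg_eq_scaledSum {P : ℤ → K[X]} (hP : IsSkeinFamily q P) (k : ℕ) :
    P (k + 1) - P (-(k + 1)) =
      (qpow q 2 + qpow q (-2)) • scaledSum q (k + 2) - scaledSum q k - scaledSum q (k + 4) := by
  have hS : S K (k + 1) = chebyshevSum K (k + 4) - chebyshevSum K (k + 2) := by
    rw [chebyshevSum_add_four, Nat.cast_add_one, add_sub_cancel_left]
  have hS' : S K (k + 1 - 2) = chebyshevSum K (k + 2) - chebyshevSum K k := by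
    rw [chebyshevSum, add_sub_cancel_left]
    ring_nf
  rw [hP.sub_neg, hS, hS']
  simp only [scaledSum, smul_smul]
  push_cast
  rw [show (k : ℤ) + 2 - 1 = k + 1 by ring, ← quantumDiff_sub_two_add_add_two,
    show (k : ℤ) + 4 - 1 = k + 1 + 2 by ring, show (k : ℤ) - 1 = k + 1 - 2 by ring]
  module

theorem scaledSum_mem_span {j k : ℕ} (hj : j < k + 4) :
    scaledSum q j ∈ Submodule.span K (torsionRelation q '' Set.Iio k) := by
  obtain hj' | hj' := lt_or_ge j 4
  · rw [scaledSum_eq_zero q hj']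
    exact zero_mem _
  · obtain ⟨i, rfl⟩ := Nat.exists_eq_add_of_le' hj'
    rw [scaledSum_add_four]
    exact neg_mem (Submodule.smul_mem _ _ (Submodule.subset_span ⟨i, by simpa using hj, rfl⟩))

variable {q} in
theorem IsSkeinFamily.span_sub_neg {P : ℤ → K[X]} (hP : IsSkeinFamily q P) :
    Submodule.span K ((fun n : ℤ => P n - P (-n)) '' {n : ℤ | 1 ≤ n}) =
      Submodule.span K (Set.range (torsionRelation q)) := by
  have image_eq_range : (fun n : ℤ => P n - P (-n)) '' {n : ℤ | 1 ≤ n} =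
      Set.range fun k : ℕ => P (k + 1) - P (-(k + 1)) := by
    have : {n : ℤ | 1 ≤ n} = Set.range fun k : ℕ => (k : ℤ) + 1 := by
      ext n
      exact ⟨fun hn => ⟨(n - 1).toNat, by grind⟩, by grind⟩
    rw [this, ← Set.range_comp]
    rfl
  rw [image_eq_range]
  refine span_range_eq_of_sub_units_smul_mem (fun k => q ^ (-(k + 3) : ℤ)) fun k => ?_
  have leading : (q ^ (-(k + 3) : ℤ)) • torsionRelation q k = -scaledSum q (k + 4) := by
    rw [scaledSum_add_four, neg_neg]
    rfl
  rw [hP.sub_neg_eq_scaledSum, leading, sub_neg_eq_add, sub_add_cancel]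
  exact sub_mem (Submodule.smul_mem _ _ (scaledSum_mem_span q (by omega)))
    (scaledSum_mem_span q (by omega))

end Skein

theorem qpow_unit_T {K : Type*} [CommRing K] :
    qpow (LaurentPolynomial.isUnit_T (R := K) 1).unit = T := by
  funext n
  induction n with
  | zero => simp [qpow_zero]
  | succ n ih => rw [qpow_add, ih, qpow_one, IsUnit.unit_spec, ← LaurentPolynomial.T_add]
  | pred n ih =>
    apply (LaurentPolynomial.isUnit_T 1).mul_left_cancel
    rw [← LaurentPolynomial.T_add, add_sub_cancel, ← ih, ← add_sub_cancel 1 (-(n : ℤ)), qpow_add,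
      qpow_one, IsUnit.unit_spec, add_sub_cancel]

end SkeinQuotient

open SkeinQuotient

theorem stmt_15_general {K : Type*} [CommRing K] (q : Kˣ) {P : ℤ → K[X]}
    (hP : IsSkeinFamily q P) :
    Nonempty ((K[X] ⧸ Submodule.span K ((fun n : ℤ => P n - P (-n)) '' {n : ℤ | 1 ≤ n})) ≃ₗ[K]
      K × DirectSum ℕ fun n => K ⧸ Ideal.span {1 - qpow q (2 * ((n : ℤ) + 1) + 4)}) := by
  have relations : torsionRelation q =
      fun k : ℕ => (1 - qpow q (2 * ((k : ℤ) + 1) + 4)) • chebyshevSumBasis K (some k) := by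
    funext k
    rw [chebyshevSumBasis_some, torsionRelation]
  rw [hP.span_sub_neg, relations]
  exact ⟨quotientSpanSMulBasisSomeEquiv _ _⟩

theorem stmt_15 (P : ℤ → R[X]) (hP : IsP P)
    (Tsub : Submodule R R[X])
    (hT : Tsub = Submodule.span R ((fun n : ℤ => P n - P (-n)) '' {n : ℤ | 1 ≤ n})) :
    Nonempty ((R[X] ⧸ Tsub) ≃ₗ[R]
      R × DirectSum ℕ fun n => R ⧸ Ideal.span {(1 : R) - T (2 * ((n : ℤ) + 1) + 4)}) := by
  have hP' : IsSkeinFamily (LaurentPolynomial.isUnit_T 1).unit P := by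
    rwa [IsSkeinFamily, qpow_unit_T]
  have main := stmt_15_general _ hP'
  rwa [qpow_unit_T, ← hT] at main
end
end
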